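/- arXiv:2004.05677 — 2 statements merged into one kernel-verified Lean document; each statement's English description precedes it below -/
import Mathlib

section
/- Let p be an odd prime, n ≥ 1, q = p^(2^n), and G = PGL₂(F_q). Fix an involution x ∈ G not lying in the image of SL₂(F_q) in G. Then the number of Klein four-subgroups of G containing x is exactly (q+1)/2, and every such Klein four-subgroup is contained in the centralizer C_G(x). -/
open Matrix

/-- `PGL₂(F)`: the projective general linear group, i.e. the quotient of `GL₂(F)`
by its center. -/
abbrev ProjectiveGL2 (F : Type) [Field F] : Type :=
  Matrix.GeneralLinearGroup (Fin 2) F ⧸ Subgroup.center (Matrix.GeneralLinearGroup (Fin 2) F)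

/-- The image of the natural map `SL₂(F) → PGL₂(F)`: the socle of `PGL₂(F)`,
isomorphic to `PSL₂(F)`. -/
def socleSL2 (F : Type) [Field F] : Subgroup (ProjectiveGL2 F) :=
  ((QuotientGroup.mk' (Subgroup.center (Matrix.GeneralLinearGroup (Fin 2) F))).comp
    Matrix.SpecialLinearGroup.toGL).range

/-!
By Cayley–Hamilton, in odd characteristic the involutions of `PGL₂(F)` are the classes of the
traceless matrices. An involution `y` lies in a common Klein four-subgroup with `x = [A]` exactly
when `x * y` is an involution too, so such `y` are the classes of the invertible matrices in the
plane `W` of all `B` with `tr B = tr (A * B) = 0`. On `W` the determinant is, up to scaling, the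
norm form of `F(√(-det A))`. If `-1` is a square, then `-det A` is not a square for `x` outer, so
every nonzero element of `W` is invertible and the `y` form the projective line `ℙ(W)`. Each Klein
four-subgroup containing `x` accounts for two of these `q + 1` points.
-/

open scoped LinearAlgebra.Projectivization

section KleinFour

variable {G : Type*} [Group G] {x y : G}

/-- The elements that generate together with an involution `x` a Klein four-subgroup. Asking for
`x * y` to be an involution encodes both `y ≠ x` and the commutation of `x` and `y`. -/
def kleinPartners (x : G) : Set G := {y | orderOf y = 2 ∧ orderOf (x * y) = 2}

lemma mul_self_of_orderOf_eq_two (hx : orderOf x = 2) : x * x = 1 := by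
  rw [← pow_two, ← hx, pow_orderOf_eq_one]

lemma ne_one_of_orderOf_eq_two (hx : orderOf x = 2) : x ≠ 1 := by
  rintro rfl
  simp at hx

lemma commute_of_mem_kleinPartners (hx : orderOf x = 2) (hy : y ∈ kleinPartners x) :
    Commute x y := by
  have hinv := inv_eq_self_of_orderOf_eq_two hy.2
  rw [_root_.mul_inv_rev, inv_eq_self_of_orderOf_eq_two hx,
    inv_eq_self_of_orderOf_eq_two hy.1] at hinv
  exact hinv.symm

lemma ne_of_mem_kleinPartners (hx : orderOf x = 2) (hy : y ∈ kleinPartners x) : x ≠ y := by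
  rintro rfl
  exact ne_one_of_orderOf_eq_two hy.2 (mul_self_of_orderOf_eq_two hx)

lemma ncard_eq_four_of_mem_kleinPartners (hx : orderOf x = 2) (hy : y ∈ kleinPartners x) :
    ({x * y, x, y, 1} : Set G).ncard = 4 := by
  have hne := ne_of_mem_kleinPartners hx hy
  have hx1 := ne_one_of_orderOf_eq_two hx
  have hy1 := ne_one_of_orderOf_eq_two hy.1
  rw [Set.ncard_insert_of_notMem (mul_notMem_of_orderOf_eq_two hx hy.1 hne),
    Set.ncard_insert_of_notMem (by simp [hne, hx1]), Set.ncard_pair hy1]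

lemma isKleinFour_and_mem_iff_coe_eq (hx : orderOf x = 2) (hy : y ∈ kleinPartners x)
    {V : Subgroup G} : IsKleinFour V ∧ x ∈ V ∧ y ∈ V ↔ (V : Set G) = {x * y, x, y, 1} := by
  have hcard := ncard_eq_four_of_mem_kleinPartners hx hy
  constructor
  · rintro ⟨hV, hxV, hyV⟩
    have hsub : ({x * y, x, y, 1} : Set G) ⊆ V := by
      rintro _ (rfl | rfl | rfl | rfl)
      exacts [V.mul_mem hxV hyV, hxV, hyV, V.one_mem]
    have hV4 : (V : Set G).ncard = 4 := hV.card_four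
    exact (Set.eq_of_subset_of_ncard_le hsub (by rw [hcard, hV4])
      (Set.finite_of_ncard_pos (by omega))).symm
  · intro hV
    have hV4 : Nat.card V = 4 := (congrArg Set.ncard hV).trans hcard
    have : Finite V := Nat.finite_of_card_ne_zero (by omega)
    have : Nontrivial V := Finite.one_lt_card_iff_nontrivial.1 (by omega)
    have horder : ∀ g : V, g ≠ 1 → orderOf g = 2 := by
      rintro ⟨g, hgV⟩ hg1
      have hg := hgV
      rw [← SetLike.mem_coe, hV] at hg
      rw [Subgroup.orderOf_mk]
      rcases hg with rfl | rfl | rfl | rfl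
      exacts [hy.2, hx, hy.1, (hg1 rfl).elim]
    refine ⟨⟨hV4, (Monoid.exponent_eq_prime_iff Nat.prime_two).2 horder⟩, ?_, ?_⟩
    all_goals rw [← SetLike.mem_coe, hV]; simp

lemma exists_subgroup_coe_eq (hx : orderOf x = 2) (hy : y ∈ kleinPartners x) :
    ∃ V : Subgroup G, (V : Set G) = {x * y, x, y, 1} := by
  have hxx := mul_self_of_orderOf_eq_two hx
  have hyy := mul_self_of_orderOf_eq_two hy.1
  have hyx : y * x = x * y := (commute_of_mem_kleinPartners hx hy).symm
  have hxxy : x * (x * y) = y := by rw [← mul_assoc, hxx, one_mul]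
  have hyxy : y * (x * y) = x := by rw [← mul_assoc, hyx, mul_assoc, hyy, mul_one]
  refine ⟨⟨⟨⟨{x * y, x, y, 1}, ?_⟩, by simp⟩, ?_⟩, rfl⟩
  · rintro a b (rfl | rfl | rfl | rfl) (rfl | rfl | rfl | rfl) <;>
      simp [mul_assoc, hxx, hyy, hyx, hxxy, hyxy]
  · rintro a (rfl | rfl | rfl | rfl) <;>
      simp [inv_eq_self_of_orderOf_eq_two hx, inv_eq_self_of_orderOf_eq_two hy.1, hyx]

lemma existsUnique_isKleinFour_and_mem (hx : orderOf x = 2) (hy : y ∈ kleinPartners x) :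
    ∃! V : Subgroup G, IsKleinFour V ∧ x ∈ V ∧ y ∈ V := by
  obtain ⟨V, hV⟩ := exists_subgroup_coe_eq hx hy
  refine ⟨V, (isKleinFour_and_mem_iff_coe_eq hx hy).2 hV, fun W hW => SetLike.coe_injective ?_⟩
  rw [hV, (isKleinFour_and_mem_iff_coe_eq hx hy).1 hW]

lemma ncard_kleinPartners_inter (hx : orderOf x = 2) {V : Subgroup G} (hV : IsKleinFour V)
    (hxV : x ∈ V) : (kleinPartners x ∩ V).ncard = 2 := by
  have horder {g : G} (hg : g ∈ V) : orderOf g = 2 ↔ g ≠ 1 := by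
    simpa using orderOf_eq_two_iff hV.exponent_two (x := ⟨g, hg⟩)
  have hdiff : kleinPartners x ∩ V = (V : Set G) \ {1, x} := by
    ext y
    rw [Set.inter_comm, Set.mem_inter_iff, Set.mem_sdiff]
    refine and_congr_right fun hyV => ?_
    simp [kleinPartners, horder hyV, horder (V.mul_mem hxV hyV), mul_eq_one_iff_inv_eq,
      inv_eq_self_of_orderOf_eq_two hx, eq_comm]
  have hsub : ({1, x} : Set G) ⊆ V := Set.pair_subset V.one_mem hxV
  have hV4 : (V : Set G).ncard = 4 := hV.card_four
  rw [hdiff, Set.ncard_sdiff hsub, hV4, Set.ncard_pair (ne_one_of_orderOf_eq_two hx).symm]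

lemma ncard_kleinPartners_eq_mul_two [Finite G] (hx : orderOf x = 2) :
    (kleinPartners x).ncard = {V : Subgroup G | IsKleinFour V ∧ x ∈ V}.ncard * 2 := by
  classical
  have := Fintype.ofFinite G
  have := Fintype.ofFinite (Subgroup G)
  rw [Set.ncard_eq_toFinset_card', Set.ncard_eq_toFinset_card', ← mul_one (Finset.card _)]
  refine Finset.card_mul_eq_card_mul (fun y V => y ∈ V) (fun y hy => ?_) (fun V hV => ?_)
  · rw [Finset.card_eq_one_iff_existsUnique]
    simpa [Finset.mem_bipartiteAbove, and_assoc] using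
      existsUnique_isKleinFour_and_mem hx (Set.mem_toFinset.1 hy)
  · obtain ⟨hVK, hxV⟩ := Set.mem_toFinset.1 hV
    rw [← ncard_kleinPartners_inter hx hVK hxV, ← Set.ncard_coe_finset]
    congr 1
    ext y
    simp

lemma le_centralizer_of_isKleinFour {V : Subgroup G} (hV : IsKleinFour V) (hx : x ∈ V) :
    V ≤ Subgroup.centralizer {x} :=
  have : IsMulCommutative V := hV.isMulCommutative
  V.le_centralizer.trans (Subgroup.centralizer_le (Set.singleton_subset_iff.2 hx))

end KleinFour

section ProjectiveLinear

variable {n : Type*} [Fintype n] [DecidableEq n]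

section CommRing

variable {R : Type*} [CommRing R] {A B : GL n R}

lemma mk_eq_one_iff_exists_smul_one :
    (A : GL n R ⧸ Subgroup.center (GL n R)) = 1 ↔ ∃ r : R, r • (1 : Matrix n n R) = A.val := by
  rw [QuotientGroup.eq_one_iff, GeneralLinearGroup.mem_center_iff_val_mem_range_scalar]
  simp only [Set.mem_range, scalar_apply, smul_one_eq_diagonal]

lemma mk_eq_mk_iff_exists_smul :
    (A : GL n R ⧸ Subgroup.center (GL n R)) = B ↔ ∃ r : R, r • A.val = B.val := by
  rw [← inv_mul_eq_one, ← QuotientGroup.mk_inv, ← QuotientGroup.mk_mul,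
    mk_eq_one_iff_exists_smul_one]
  refine exists_congr fun r => ?_
  rw [Units.val_mul, Units.eq_inv_mul_iff_mul_eq, mul_smul_comm, mul_one]

end CommRing

lemma ncard_image_mk_eq_card_projectivization [Nonempty n] {F : Type*} [Field F]
    (W : Submodule F (Matrix n n F)) (hW : ∀ B ∈ W, B ≠ 0 → B.det ≠ 0) :
    (((↑) : GL n F → GL n F ⧸ Subgroup.center (GL n F)) '' {B | B.val ∈ W}).ncard =
      Nat.card (ℙ F W) := by
  have hrep (v : ℙ F W) : (v.rep : Matrix n n F).det ≠ 0 :=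
    hW _ v.rep.2 (by simpa using v.rep_nonzero)
  let toPGL (v : ℙ F W) : GL n F ⧸ Subgroup.center (GL n F) :=
    (GeneralLinearGroup.mkOfDetNeZero v.rep.val (hrep v) : GL n F)
  have hinj : Function.Injective toPGL := by
    intro v w hvw
    obtain ⟨r, hr⟩ := mk_eq_mk_iff_exists_smul.1 hvw
    rw [← v.mk_rep, ← w.mk_rep, eq_comm, Projectivization.mk_eq_mk_iff']
    exact ⟨r, Subtype.ext hr⟩
  have hrange : Set.range toPGL = (↑) '' {B : GL n F | B.val ∈ W} := by
    ext y
    constructor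
    · rintro ⟨v, rfl⟩
      exact ⟨_, v.rep.2, rfl⟩
    · rintro ⟨B, hB, rfl⟩
      have hB0 : (⟨B.val, hB⟩ : W) ≠ 0 := fun h => B.ne_zero (congrArg Subtype.val h)
      obtain ⟨r, hr⟩ := Projectivization.exists_smul_eq_mk_rep F _ hB0
      exact ⟨_, (mk_eq_mk_iff_exists_smul.2 ⟨(r : F), congrArg Subtype.val hr⟩).symm⟩
  rw [← hrange, Set.ncard_range_of_injective hinj]

end ProjectiveLinear

section TraceForm

section CommRing

variable {R : Type*} [CommRing R]

/-- The orthogonal complement of `1` and `A` for the trace form `(B, C) ↦ tr (B * C)`. In odd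
characteristic, its invertible elements represent `kleinPartners` of the class of `A` in `PGL₂`. -/
def traceOrthogonal {n : Type*} [Fintype n] [DecidableEq n] (A : Matrix n n R) :
    Submodule R (Matrix n n R) :=
  LinearMap.ker ((traceLinearMap n R R).prod (traceLinearMap n R R ∘ₗ LinearMap.mulLeft R A))

lemma mem_traceOrthogonal {n : Type*} [Fintype n] [DecidableEq n] {A B : Matrix n n R} :
    B ∈ traceOrthogonal A ↔ B.trace = 0 ∧ (A * B).trace = 0 := by
  simp [traceOrthogonal]

lemma sq_eq_trace_smul_sub_det_smul_one (A : Matrix (Fin 2) (Fin 2) R) :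
    A ^ 2 = A.trace • A - A.det • 1 := by
  ext i j
  fin_cases i <;> fin_cases j <;>
    simp [pow_two, mul_apply, Fin.sum_univ_two, trace_fin_two, det_fin_two] <;> ring

variable {A B : Matrix (Fin 2) (Fin 2) R}

lemma apply_one_zero_ne_zero_of_not_isSquare_neg_det (hA : A.trace = 0)
    (hdet : ¬ IsSquare (-A.det)) : A 1 0 ≠ 0 := by
  refine fun hc => hdet ⟨A 0 0, ?_⟩
  rw [trace_fin_two] at hA
  rw [det_fin_two, hc]
  linear_combination -A 0 0 * hA

lemma sq_add_det_mul_sq_eq_of_mem_traceOrthogonal (hA : A.trace = 0)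
    (hB : B ∈ traceOrthogonal A) :
    (A 1 0 * B 0 0 - A 0 0 * B 1 0) ^ 2 + A.det * B 1 0 ^ 2 = -(A 1 0) ^ 2 * B.det := by
  obtain ⟨htr, htrA⟩ := mem_traceOrthogonal.1 hB
  simp only [trace_fin_two, mul_apply, Fin.sum_univ_two] at hA htr htrA
  rw [det_fin_two, det_fin_two, eq_neg_of_add_eq_zero_right htr,
    eq_neg_of_add_eq_zero_right hA]
  rw [eq_neg_of_add_eq_zero_right htr, eq_neg_of_add_eq_zero_right hA] at htrA
  linear_combination -A 1 0 * B 1 0 * htrA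

end CommRing

variable {F : Type*} [Field F] {A B : Matrix (Fin 2) (Fin 2) F}

lemma finrank_traceOrthogonal (hA : A 1 0 ≠ 0) : Module.finrank F (traceOrthogonal A) = 2 := by
  let φ := (traceLinearMap (Fin 2) F F).prod
    (traceLinearMap (Fin 2) F F ∘ₗ LinearMap.mulLeft F A)
  have hsurj : LinearMap.range φ = ⊤ := by
    refine LinearMap.range_eq_top.2 fun ⟨s, t⟩ => ⟨!![s, (t - A 0 0 * s) / A 1 0; 0, 0], ?_⟩
    have ht : A 0 0 * s + A 1 0 * ((t - A 0 0 * s) / A 1 0) = t := by field_simp; ring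
    simpa [φ, trace_fin_two, mul_apply] using ht
  have hrank : Module.finrank F (F × F) + Module.finrank F (traceOrthogonal A) =
      Module.finrank F (Matrix (Fin 2) (Fin 2) F) := by
    rw [← φ.finrank_range_add_finrank_ker, hsurj, finrank_top]
    rfl
  rw [Module.finrank_prod, Module.finrank_self, Module.finrank_matrix, Module.finrank_self,
    Fintype.card_fin] at hrank
  omega

lemma det_ne_zero_of_mem_traceOrthogonal (hA : A.trace = 0) (hdet : ¬ IsSquare (-A.det))
    (hB : B ∈ traceOrthogonal A) (hB0 : B ≠ 0) : B.det ≠ 0 := by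
  intro hBdet
  have hc := apply_one_zero_ne_zero_of_not_isSquare_neg_det hA hdet
  have hnorm := sq_add_det_mul_sq_eq_of_mem_traceOrthogonal hA hB
  rw [hBdet, mul_zero] at hnorm
  have h10 : B 1 0 = 0 := by
    by_contra h10
    refine hdet ⟨(A 1 0 * B 0 0 - A 0 0 * B 1 0) / B 1 0, ?_⟩
    field_simp
    linear_combination -hnorm
  have h00 : B 0 0 = 0 := by simpa [h10, hc] using hnorm
  obtain ⟨htr, htrA⟩ := mem_traceOrthogonal.1 hB
  have h11 : B 1 1 = 0 := by simpa [trace_fin_two, h00] using htr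
  have h01 : B 0 1 = 0 := by simpa [trace_fin_two, mul_apply, h00, h10, h11, hc] using htrA
  refine hB0 ?_
  ext i j
  fin_cases i <;> fin_cases j <;> assumption

end TraceForm

section ProjectiveGL2

variable {F : Type} [Field F]

lemma orderOf_mk_eq_two_iff (h2 : (2 : F) ≠ 0) {A : GL (Fin 2) F} :
    orderOf (A : ProjectiveGL2 F) = 2 ↔ A.val.trace = 0 := by
  have hsq := sq_eq_trace_smul_sub_det_smul_one A.val
  rw [orderOf_eq_prime_iff, ← QuotientGroup.mk_pow, mk_eq_one_iff_exists_smul_one, Ne,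
    mk_eq_one_iff_exists_smul_one, Units.val_pow_eq_pow_val, hsq]
  constructor
  · rintro ⟨⟨r, hr⟩, hscalar⟩
    by_contra htr
    refine hscalar ⟨A.val.trace⁻¹ * (r + A.val.det), ?_⟩
    rw [mul_smul, add_smul, hr, sub_add_cancel, inv_smul_smul₀ htr]
  · intro htr
    refine ⟨⟨-A.val.det, by rw [htr, zero_smul, zero_sub, neg_smul]⟩, ?_⟩
    rintro ⟨r, hr⟩
    have hr0 : r = 0 := by simpa [← hr, h2] using htr
    exact A.ne_zero (by rw [← hr, hr0, zero_smul])

lemma mk_mem_socleSL2_of_isSquare_det {A : GL (Fin 2) F} (hA : IsSquare A.val.det) :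
    (A : ProjectiveGL2 F) ∈ socleSL2 F := by
  obtain ⟨s, hs⟩ := hA
  have hs0 : s ≠ 0 := by
    rintro rfl
    exact A.det_ne_zero (by simpa using hs)
  have hdet : (s⁻¹ • A.val).det = 1 := by
    rw [det_smul, hs, Fintype.card_fin]
    field_simp
  refine ⟨⟨s⁻¹ • A.val, hdet⟩, mk_eq_mk_iff_exists_smul.2 ⟨s, ?_⟩⟩
  exact smul_inv_smul₀ hs0 A.val

lemma mk_mem_kleinPartners_iff (h2 : (2 : F) ≠ 0) {A B : GL (Fin 2) F} :
    (B : ProjectiveGL2 F) ∈ kleinPartners (A : ProjectiveGL2 F) ↔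
      B.val ∈ traceOrthogonal A.val := by
  rw [mem_traceOrthogonal, ← orderOf_mk_eq_two_iff h2, ← Units.val_mul,
    ← orderOf_mk_eq_two_iff h2, QuotientGroup.mk_mul]
  rfl

lemma kleinPartners_mk (h2 : (2 : F) ≠ 0) (A : GL (Fin 2) F) :
    kleinPartners (A : ProjectiveGL2 F) =
      (↑) '' {B : GL (Fin 2) F | B.val ∈ traceOrthogonal A.val} := by
  simp_rw [← mk_mem_kleinPartners_iff h2]
  exact (Set.image_preimage_eq _ QuotientGroup.mk_surjective).symm

lemma ncard_isKleinFour_mem_mk_mul_two [Finite F] (h2 : (2 : F) ≠ 0) {A : GL (Fin 2) F}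
    (hA : A.val.trace = 0) (hdet : ¬ IsSquare (-A.val.det)) :
    {V : Subgroup (ProjectiveGL2 F) | IsKleinFour V ∧ (A : ProjectiveGL2 F) ∈ V}.ncard * 2 =
      Nat.card F + 1 := by
  have hrank := finrank_traceOrthogonal (apply_one_zero_ne_zero_of_not_isSquare_neg_det hA hdet)
  rw [← ncard_kleinPartners_eq_mul_two ((orderOf_mk_eq_two_iff h2).2 hA), kleinPartners_mk h2,
    ncard_image_mk_eq_card_projectivization _ fun B =>
      det_ne_zero_of_mem_traceOrthogonal hA hdet,
    Projectivization.card_of_finrank_two F (traceOrthogonal A.val) hrank]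

theorem count_klein_four_containing_outer_involution_general [Fintype F]
    (hF : Fintype.card F % 4 = 1) (x : ProjectiveGL2 F) (hx : orderOf x = 2)
    (hxS : x ∉ socleSL2 F) :
    {V : Subgroup (ProjectiveGL2 F) | IsKleinFour V ∧ x ∈ V}.ncard =
      (Fintype.card F + 1) / 2 ∧
    ∀ V : Subgroup (ProjectiveGL2 F), IsKleinFour V → x ∈ V → V ≤ Subgroup.centralizer {x} := by
  refine ⟨?_, fun V => le_centralizer_of_isKleinFour⟩
  have h2 : (2 : F) ≠ 0 := Ring.two_ne_zero fun h => by
    have := FiniteField.even_card_iff_char_two.1 h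
    omega
  have hneg : IsSquare (-1 : F) := FiniteField.isSquare_neg_one_iff.2 (by omega)
  induction x using QuotientGroup.induction_on with | H A => ?_
  have hdet : ¬ IsSquare (-A.val.det) := fun h =>
    hxS (mk_mem_socleSL2_of_isSquare_det (by simpa using hneg.mul h))
  have hcount := ncard_isKleinFour_mem_mk_mul_two h2 ((orderOf_mk_eq_two_iff h2).1 hx) hdet
  rw [Nat.card_eq_fintype_card] at hcount
  omega

end ProjectiveGL2

lemma odd_pow_two_pow_mod_four {p n : ℕ} (hp : Odd p) (hn : 1 ≤ n) : p ^ 2 ^ n % 4 = 1 := by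
  obtain ⟨m, rfl⟩ := Nat.exists_eq_add_of_le' hn
  rw [pow_succ, pow_mul]
  zify
  exact Int.sq_mod_four_eq_one_of_odd (by exact_mod_cast hp.pow)

/-- An outer involution `x` of `PGL₂(q)` lies in exactly `(q+1)/2` Klein four-subgroups,
all of which are contained in the centralizer of `x`. -/
theorem count_klein_four_containing_outer_involution (p n : ℕ) (hp : Nat.Prime p) (hodd : Odd p) (hn : 1 ≤ n)
    (F : Type) [Field F] [Fintype F] (hF : Fintype.card F = p ^ 2 ^ n)
    (x : ProjectiveGL2 F) (hx : orderOf x = 2) (hxS : x ∉ socleSL2 F) :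
    {V : Subgroup (ProjectiveGL2 F) | IsKleinFour ↥V ∧ x ∈ V}.ncard
      = (p ^ 2 ^ n + 1) / 2 ∧
    ∀ V : Subgroup (ProjectiveGL2 F), IsKleinFour ↥V → x ∈ V →
      V ≤ Subgroup.centralizer {x} := by
  exact hF ▸ count_klein_four_containing_outer_involution_general
    (hF ▸ odd_pow_two_pow_mod_four hodd hn) x hx hxS
end

section
/- Let p be an odd prime, n ≥ 1, q = p^(2^n), and G = PGL₂(F_q). Fix an involution x ∈ G not lying in the image of SL₂(F_q) in G. If H is a proper subgroup of G with ⟨x⟩ < H and H is an intersection of a (nonempty) family of maximal subgroups of G, then H is isomorphic to the dihedral group of order 2(q+1), or to the dihedral group of order 2(q−1), or to the Klein four-group. -/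
open Matrix

/-!
Over a quadratic extension `L` of `F` a nontrivial element of `PGL(2, F)` has two fixed points on
the projective line, counted with multiplicity, and the elements outside the image of `SL(2, F)`
have two distinct ones. Let `M` be a proper subgroup containing an outer involution `x`. No point
fixed by an outer element `g` of `M` is the only fixed point of an element of `M`: otherwise, with
this point moved to infinity, `M` contains translations by an additive subgroup of `F` stable under
multiplication by a nonsquare. As every proper subfield of `F` consists of squares, this subgroup
is all of `F`, and since `x` has no fixed point over `F`, `M` contains the image of `SL(2, F)` and
is everything. The stabilizer in `M` of a point fixed by `g` does not have order `4` either. The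
count of fixed points by orbits then leaves only the possibility that `M` preserves a pair of
points, that is, `M` centralizes an involution `t`.

Hence the maximal subgroups containing `x` are centralizers of involutions. For `t` the class of a
traceless matrix `T`, the centralizer of `t` contains the cyclic group `F[T]ˣ / Fˣ` with index two,
and all its elements outside this group are involutions, so it is dihedral. Two distinct such
cyclic groups meet trivially, so the intersection of two of the centralizers has order at most four
and exponent at most two.
-/

open Matrix.ProjGenLinGroup (mk mk_surjective mk_eq_mk_iff)
open Matrix.GeneralLinearGroup (upperRightHom)
open scoped Pointwise MatrixGroups OnePoint

section IndexTwo

variable {G : Type*} [Group G] {S H : Subgroup G}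

theorem relIndex_eq_two_of_index_eq_two (hS : S.index = 2) (hH : ¬ H ≤ S) : S.relIndex H = 2 := by
  have := Subgroup.normal_of_index_eq_two hS
  have hdvd : S.relIndex H ∣ 2 := hS ▸ S.relIndex_dvd_index_of_normal H
  exact (Nat.prime_two.eq_one_or_self_of_dvd _ hdvd).resolve_left
    fun h ↦ hH (Subgroup.relIndex_eq_one.1 h)

theorem two_mul_ncard_sdiff [Finite G] (hS : S.index = 2) (hH : ¬ H ≤ S) :
    2 * (H \ S : Set G).ncard = Nat.card H := by
  have hcard : Nat.card ↥(S ⊓ H) * 2 = Nat.card H := by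
    rw [← relIndex_eq_two_of_index_eq_two hS hH, ← Subgroup.relIndex_bot_left,
      Subgroup.relIndex_inf_mul_relIndex, bot_inf_eq, Subgroup.relIndex_bot_left]
  have hsplit : (H ∩ S : Set G).ncard + (H \ S : Set G).ncard = Nat.card H :=
    Set.ncard_inter_add_ncard_sdiff_eq_ncard _ _
  have hinter : (H ∩ S : Set G).ncard = Nat.card ↥(S ⊓ H) := by
    rw [Set.inter_comm]; rfl
  lia

theorem eq_top_of_index_eq_two (hS : S.index = 2) (hSH : S ≤ H) (hH : ¬ H ≤ S) : H = ⊤ := by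
  have hmul := Subgroup.relIndex_mul_index hSH
  rw [relIndex_eq_two_of_index_eq_two hS hH, hS] at hmul
  exact Subgroup.index_eq_one.1 (by lia)

end IndexTwo

section OrbitArithmetic

theorem exists_eq_two_of_add_eq {e c₁ c₂ c₃ o₁ o₂ o₃ : ℕ}
    (h₁ : o₁ * c₁ = e) (h₂ : o₂ * c₂ = e) (h₃ : o₃ * c₃ = e)
    (hc₁ : Even c₁ ∧ c₁ ≠ 0 ∧ c₁ ≠ 4) (hc₂ : Even c₂ ∧ c₂ ≠ 0 ∧ c₂ ≠ 4) (hc₃ : 2 ≤ c₃)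
    (hsum : o₁ + o₂ + o₃ = e + 2) : o₁ = 2 ∨ o₂ = 2 ∨ o₃ = 2 := by
  have two_or_six_le {c : ℕ} (hc : Even c ∧ c ≠ 0 ∧ c ≠ 4) : c = 2 ∨ 6 ≤ c := by grind
  have two_or_three_le : c₃ = 2 ∨ 3 ≤ c₃ := by lia
  rcases two_or_six_le hc₁ with rfl | hc₁ <;> rcases two_or_six_le hc₂ with rfl | hc₂
  · lia
  · have := Nat.mul_le_mul_left o₂ hc₂
    rcases two_or_three_le with rfl | h
    · lia
    · have := Nat.mul_le_mul_left o₃ h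
      lia
  · have := Nat.mul_le_mul_left o₁ hc₁
    rcases two_or_three_le with rfl | h
    · lia
    · have := Nat.mul_le_mul_left o₃ h
      lia
  · have := Nat.mul_le_mul_left o₁ hc₁
    have := Nat.mul_le_mul_left o₂ hc₂
    have := Nat.mul_le_mul_left o₃ hc₃
    lia

variable {ι : Type*}

theorem exists_ne_of_sum_eq_two_mul [Fintype ι] {f : ι → ℕ} {a : ℕ} (ha : a ≠ 0)
    (hf : ∀ i, f i = 0 ∨ f i = a) (hsum : ∑ i, f i = 2 * a) :
    ∃ i j, i ≠ j ∧ f i ≠ 0 ∧ f j ≠ 0 := by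
  classical
  have hcard : (Finset.univ.filter (f · ≠ 0)).card * a = 2 * a := by
    rw [← hsum, ← Finset.sum_filter_ne_zero, Finset.sum_const_nat]
    exact fun i hi ↦ (hf i).resolve_left (Finset.mem_filter.1 hi).2
  obtain ⟨i, j, hij, h⟩ := Finset.card_eq_two.1 (Nat.eq_of_mul_eq_mul_right ha.bot_lt hcard)
  have hmem : ∀ k ∈ ({i, j} : Finset ι), f k ≠ 0 := by simp [← h]
  exact ⟨i, j, hij, hmem i (by simp), hmem j (by simp)⟩

theorem sum_eq_zero_or_exists_eq_of_le_two_mul {s : Finset ι} {w : ι → ℕ} {e : ℕ}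
    (hw : ∀ k ∈ s, w k ≠ 0 → e ≤ 2 * w k) (hsum : ∑ k ∈ s, w k < e) :
    ∑ k ∈ s, w k = 0 ∨ ∃ k ∈ s, w k ≠ 0 ∧ ∑ k ∈ s, w k = w k := by
  classical
  by_cases hzero : ∀ k ∈ s, w k = 0
  · exact .inl (Finset.sum_eq_zero hzero)
  push Not at hzero
  obtain ⟨k, hk, hwk⟩ := hzero
  refine .inr ⟨k, hk, hwk, Finset.sum_eq_single_of_mem k hk fun l hl hlk ↦ ?_⟩
  by_contra hwl
  have hle : w k + w l ≤ ∑ k ∈ s, w k := by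
    rw [← Finset.sum_pair hlk.symm]
    exact Finset.sum_le_sum_of_subset (by grind)
  have := hw k hk hwk
  have := hw l hl hwl
  lia

theorem eq_one_or_exists_eq_two_of_sum [Fintype ι] {o c w : ι → ℕ} {e : ℕ} (he : e ≠ 0)
    (hoc : ∀ i, o i * c i = e) (hw : ∀ i, w i + o i = e ∨ e ≤ w i)
    (hsum : ∑ i, w i + 2 = 2 * e) {i j : ι} (hij : i ≠ j)
    (hi : Even (c i) ∧ c i ≠ 4 ∧ w i + o i = e) (hj : Even (c j) ∧ c j ≠ 4 ∧ w j + o j = e) :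
    (o i = 1 ∧ o j = 1) ∨ ∃ k, o k = 2 ∧ c k ≠ 1 := by
  classical
  have ho (k) : o k ≠ 0 := fun h ↦ he (by rw [← hoc k, h, zero_mul])
  have hc (k) : c k ≠ 0 := fun h ↦ he (by rw [← hoc k, h, mul_zero])
  have two_mul_le {k} (hk : 2 ≤ c k) : 2 * o k ≤ e := by
    rw [mul_comm, ← hoc k]; exact Nat.mul_le_mul_left _ hk
  have two_le {k} (hk : w k ≠ 0) (hlt : w k + o k = e) : 2 ≤ c k := by
    have hk1 : c k ≠ 1 := fun h ↦ by have := hoc k; grind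
    have := hc k
    lia
  have hoi := two_mul_le (k := i) (by have := hc i; grind)
  have hoj := two_mul_le (k := j) (by have := hc j; grind)
  have hrest : w i + (w j + ∑ k ∈ (Finset.univ.erase i).erase j, w k) = ∑ k, w k := by
    rw [Finset.add_sum_erase _ _ (by simp [hij.symm]), Finset.add_sum_erase _ _ (by simp)]
  have half_le : ∀ k ∈ (Finset.univ.erase i).erase j, w k ≠ 0 → e ≤ 2 * w k := by
    intro k _ hk
    rcases hw k with h | h
    · have := two_mul_le (two_le hk h)
      lia
    · lia
  have := ho i
  have := ho j
  rcases sum_eq_zero_or_exists_eq_of_le_two_mul half_le (by lia) with h | ⟨k, -, hwk, h⟩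
  · left; lia
  have hwk' : w k + o k = e := (hw k).resolve_right (by lia)
  have h := exists_eq_two_of_add_eq (hoc i) (hoc j) (hoc k) ⟨hi.1, hc i, hi.2.1⟩
    ⟨hj.1, hc j, hj.2.1⟩ (two_le hwk hwk') (by lia)
  right
  rcases h with h | h | h
  · exact ⟨i, h, by grind⟩
  · exact ⟨j, h, by grind⟩
  · exact ⟨k, h, by have := two_le hwk hwk'; lia⟩

end OrbitArithmetic

section FixedPoints

open MulAction

variable {G X : Type*} [Group G] [MulAction G X]

open Classical in
/-- The number of times `x` counts as a fixed point of `g`, a fixed point being counted twice when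
it is the only one, so that a Möbius transformation has two fixed points with multiplicity. -/
noncomputable def fixMultiplicity (g : G) (x : X) : ℕ :=
  if fixedBy X g = {x} then 2 else if g • x = x then 1 else 0

theorem fixMultiplicity_conj (h g : G) (x : X) :
    fixMultiplicity (h * g * h⁻¹) (h • x) = fixMultiplicity g x := by
  have hfix : fixedBy X (h * g * h⁻¹) = {h • x} ↔ fixedBy X g = {x} := by
    rw [← smul_fixedBy, ← Set.smul_set_singleton]
    exact (MulAction.injective h).eq_iff
  have hsmul : (h * g * h⁻¹) • h • x = h • x ↔ g • x = x := by
    rw [mul_smul, mul_smul, inv_smul_smul, smul_left_cancel_iff]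
  grind [fixMultiplicity]

theorem sum_fixMultiplicity [Fintype X] {g : G}
    (hg : (fixedBy X g).ncard = 1 ∨ (fixedBy X g).ncard = 2) :
    ∑ x : X, fixMultiplicity g x = 2 := by
  classical
  rcases hg with hg | hg
  · obtain ⟨a, ha⟩ := Set.ncard_eq_one.1 hg
    have hfix (x : X) : g • x = x ↔ x = a := by
      rw [← mem_fixedBy, ha, Set.mem_singleton_iff]
    simp +contextual [fixMultiplicity, ha, hfix, eq_comm]
  · have hne (x : X) : fixedBy X g ≠ {x} := fun h ↦ by simp [h] at hg
    simp only [fixMultiplicity, hne, if_false, Finset.sum_boole]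
    rw [← hg, ← Set.ncard_coe_finset]
    simp [fixedBy]

theorem card_orbit_mul_card_stabilizer (x : X) :
    Nat.card (orbit G x) * Nat.card (stabilizer G x) = Nat.card G := by
  rw [← Nat.card_prod, Nat.card_congr (orbitProdStabilizerEquivGroup G x)]

open Classical in
theorem sum_eq_sum_card_orbit_mul [Fintype X] {f : X → ℕ} (hf : ∀ (g : G) x, f (g • x) = f x) :
    ∑ x, f x = ∑ ω : orbitRel.Quotient G X, Nat.card (orbit G ω.out) * f ω.out := by
  rw [← Finset.sum_fiberwise _ (Quotient.mk (orbitRel G X))]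
  refine Finset.sum_congr rfl fun ω _ ↦ ?_
  have horbit (x : X) : Quotient.mk (orbitRel G X) x = ω ↔ x ∈ orbit G ω.out := by
    rw [← orbitRel_apply, ← Quotient.eq, Quotient.out_eq]
  simp only [horbit]
  rw [Nat.card_eq_fintype_card, Fintype.card_subtype]
  refine Finset.sum_const_nat fun x hx ↦ ?_
  obtain ⟨g, rfl⟩ := (Finset.mem_filter.1 hx).2
  exact hf g _

theorem card_orbit_mul_ncard_stabilizer_sdiff [Finite G] {S : Subgroup G} (hS : S.index = 2)
    (x : X) : Nat.card (orbit G x) * (stabilizer G x \ S : Set G).ncard = 0 ∨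
      Nat.card (orbit G x) * (stabilizer G x \ S : Set G).ncard = Nat.card G / 2 := by
  by_cases hx : stabilizer G x ≤ S
  · left; rw [Set.sdiff_eq_empty.2 hx, Set.ncard_empty, mul_zero]
  · right
    rw [← card_orbit_mul_card_stabilizer (G := G) x, ← two_mul_ncard_sdiff hS hx,
      mul_left_comm, Nat.mul_div_cancel_left _ two_pos]

theorem ncard_stabilizer_sdiff_smul (S : Subgroup G) [S.Normal] (g : G) (x : X) :
    (stabilizer G (g • x) \ S : Set G).ncard = (stabilizer G x \ S : Set G).ncard := by
  rw [← Set.ncard_image_of_injective (stabilizer G x \ S : Set G) (MulAut.conj g).injective,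
    Set.image_sdiff (MulAut.conj g).injective, stabilizer_smul_eq_stabilizer_map_conj]
  nth_rw 1 [← Subgroup.Normal.map_conj_eq S g]
  rfl

theorem exists_invariant_pair_of_card_orbit_eq_two {x : X} (hx : Nat.card (orbit G x) = 2)
    (hstab : Nat.card (stabilizer G x) ≠ 1) :
    ∃ P Q : X, P ≠ Q ∧ (∀ g : G, g • ({P, Q} : Set X) = {P, Q}) ∧
      ∃ g : G, g ≠ 1 ∧ g • P = P ∧ g • Q = Q := by
  obtain ⟨P, Q, hPQ, horbit⟩ := Set.ncard_eq_two.1 hx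
  have hinv (g : G) : g • ({P, Q} : Set X) = {P, Q} := by rw [← horbit, smul_orbit]
  have fixes_both {g : G} (hg : g • P = P) : g • Q = Q := by
    have hQ : g • Q ∈ ({P, Q} : Set X) := hinv g ▸ Set.smul_mem_smul_set (by simp)
    refine hQ.resolve_left fun h ↦ hPQ (smul_left_cancel g (hg.trans h.symm))
  have hP : P ∈ orbit G x := horbit ▸ Set.mem_insert P {Q}
  have hstabP : Nat.card (stabilizer G P) = Nat.card (stabilizer G x) := by
    have hxP := card_orbit_mul_card_stabilizer (G := G) x
    have hPP := card_orbit_mul_card_stabilizer (G := G) P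
    rw [orbit_eq_iff.2 hP] at hPP
    exact Nat.eq_of_mul_eq_mul_left (by lia) (hPP.trans hxP.symm)
  obtain ⟨g, hg, hg1⟩ := ((stabilizer G P).bot_or_exists_ne_one).resolve_left
    (mt Subgroup.card_eq_one.2 (hstabP ▸ hstab))
  exact ⟨P, Q, hPQ, hinv, g, hg1, hg, fixes_both hg⟩

theorem exists_invariant_pair_of_card_orbit_eq_one [Nontrivial G] {P Q : X} (hPQ : P ≠ Q)
    (hP : Nat.card (orbit G P) = 1) (hQ : Nat.card (orbit G Q) = 1) :
    ∃ P Q : X, P ≠ Q ∧ (∀ g : G, g • ({P, Q} : Set X) = {P, Q}) ∧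
      ∃ g : G, g ≠ 1 ∧ g • P = P ∧ g • Q = Q := by
  have fixed {x : X} (hx : Nat.card (orbit G x) = 1) (g : G) : g • x = x :=
    have := (Nat.card_eq_one_iff_unique.1 hx).1
    congrArg Subtype.val (Subsingleton.elim (⟨g • x, g, rfl⟩ : orbit G x) ⟨x, mem_orbit_self x⟩)
  obtain ⟨g, hg⟩ := exists_ne (1 : G)
  refine ⟨P, Q, hPQ, fun g ↦ ?_, g, hg, fixed hP g, fixed hQ g⟩
  rw [← Set.image_smul, Set.image_pair, fixed hP, fixed hQ]

theorem sum_ncard_stabilizer_sdiff [Finite G] [Fintype X] {S : Subgroup G} (hS : S.index = 2)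
    (hout : ∀ g ∉ S, (fixedBy X g).ncard = 2) :
    ∑ x : X, (stabilizer G x \ S : Set G).ncard = Nat.card G := by
  classical
  have := Fintype.ofFinite G
  have hcompl := two_mul_ncard_sdiff hS (H := ⊤) (by rw [top_le_iff]; rintro rfl; simp at hS)
  rw [Subgroup.card_top, Subgroup.coe_top] at hcompl
  simp only [Set.ncard_eq_toFinset_card', Set.toFinset_card] at hout hcompl ⊢
  have hcard (x : X) : Fintype.card ↥(↑(stabilizer G x) \ (S : Set G)) =
      ∑ g : G with g ∉ S, if g • x = x then 1 else 0 := by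
    rw [Finset.sum_boole, Fintype.card_subtype, Finset.filter_filter]
    simp [and_comm]
  simp only [hcard]
  rw [Finset.sum_comm, Finset.sum_const_nat (m := 2)]
  · rw [← hcompl, mul_comm, Fintype.card_subtype]
    simp
  · intro g hg
    rw [← hout g (Finset.mem_filter.1 hg).2, Fintype.card_subtype]
    simp

section FixWeight

variable [Fintype G]

open Classical in
variable (G) in
/-- The number of nontrivial elements of `G` fixing `x`, counted with `fixMultiplicity`. -/
noncomputable def fixWeight (x : X) : ℕ :=
  ∑ g : G with g ≠ 1, fixMultiplicity g x

theorem fixWeight_smul (h : G) (x : X) : fixWeight G (h • x) = fixWeight G x := by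
  classical
  refine (Finset.sum_equiv (MulAut.conj h).toEquiv ?_ ?_).symm
  · simp
  · simp [fixMultiplicity_conj]

theorem sum_fixWeight_add_two [Fintype X]
    (hfix : ∀ g : G, g ≠ 1 → (fixedBy X g).ncard = 1 ∨ (fixedBy X g).ncard = 2) :
    ∑ x : X, fixWeight G x + 2 = 2 * Nat.card G := by
  classical
  have hcard : (Finset.univ.filter fun g : G ↦ g ≠ 1).card + 1 = Nat.card G := by
    rw [Finset.filter_ne', Finset.card_erase_add_one (Finset.mem_univ _), Finset.card_univ,
      Nat.card_eq_fintype_card]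
  simp only [fixWeight]
  rw [Finset.sum_comm, Finset.sum_const_nat fun g hg ↦
    sum_fixMultiplicity (hfix g (Finset.mem_filter.1 hg).2)]
  lia

open Classical in
theorem sum_smul_eq_self_add_one (x : X) :
    ∑ g : G with g ≠ 1, (if g • x = x then 1 else 0) + 1 = Nat.card (stabilizer G x) := by
  have hstab : Nat.card (stabilizer G x) = ∑ g : G, if g • x = x then 1 else 0 := by
    rw [Finset.sum_boole, Nat.card_eq_fintype_card, Fintype.card_subtype]
    simp
  rw [hstab, Finset.filter_ne', ← Finset.sum_erase_add _ _ (Finset.mem_univ 1), one_smul,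
    if_pos rfl]

theorem fixWeight_add_one {x : X} (hx : ∀ g : G, g ≠ 1 → fixedBy X g ≠ {x}) :
    fixWeight G x + 1 = Nat.card (stabilizer G x) := by
  classical
  rw [← sum_smul_eq_self_add_one, fixWeight, Finset.sum_congr rfl]
  intro g hg
  simp [fixMultiplicity, hx g (Finset.mem_filter.1 hg).2]

theorem card_stabilizer_le_fixWeight {g : G} (hg : g ≠ 1) {x : X} (hx : fixedBy X g = {x}) :
    Nat.card (stabilizer G x) ≤ fixWeight G x := by
  classical
  rw [← sum_smul_eq_self_add_one, Nat.succ_le_iff, fixWeight]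
  refine Finset.sum_lt_sum (fun h _ ↦ ?_) ⟨g, by simpa using hg, ?_⟩
  · grind [fixMultiplicity]
  · grind [fixMultiplicity]

theorem card_orbit_mul_fixWeight (x : X) :
    Nat.card (orbit G x) * fixWeight G x + Nat.card (orbit G x) = Nat.card G ∨
      Nat.card G ≤ Nat.card (orbit G x) * fixWeight G x := by
  rw [← card_orbit_mul_card_stabilizer (G := G) x]
  by_cases! hx : ∀ g : G, g ≠ 1 → fixedBy X g ≠ {x}
  · left; rw [← fixWeight_add_one hx, mul_add_one]
  · obtain ⟨g, hg, hgx⟩ := hx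
    exact .inr (Nat.mul_le_mul_left _ (card_stabilizer_le_fixWeight hg hgx))

end FixWeight

/-- A weighted version of the count of fixed points behind the classification of finite rotation
groups: the elements outside `S` fix twice as many points as there are such elements, which leaves
room for only two orbits with a stabilizer not contained in `S`. -/
theorem exists_invariant_pair [Finite G] [Finite X] {S : Subgroup G} (hS : S.index = 2)
    (hfix : ∀ g : G, g ≠ 1 → (fixedBy X g).ncard = 1 ∨ (fixedBy X g).ncard = 2)
    (hout : ∀ g ∉ S, (fixedBy X g).ncard = 2)
    (huni : ∀ g ∉ S, ∀ x : X, g • x = x → ∀ u : G, fixedBy X u ≠ {x})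
    (hfour : ∀ g ∉ S, ∀ x : X, g • x = x → Nat.card (stabilizer G x) ≠ 4) :
    ∃ P Q : X, P ≠ Q ∧ (∀ g : G, g • ({P, Q} : Set X) = {P, Q}) ∧
      ∃ g : G, g ≠ 1 ∧ g • P = P ∧ g • Q = Q := by
  classical
  have := Fintype.ofFinite G
  have := Fintype.ofFinite X
  have := Subgroup.normal_of_index_eq_two hS
  have hcard : 2 * (Nat.card G / 2) = Nat.card G :=
    Nat.mul_div_cancel' (hS ▸ S.index_dvd_card)
  have houter := sum_ncard_stabilizer_sdiff hS hout
  rw [sum_eq_sum_card_orbit_mul (G := G) (ncard_stabilizer_sdiff_smul S), ← hcard] at houter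
  obtain ⟨i, j, hij, hi, hj⟩ := exists_ne_of_sum_eq_two_mul
    (by have := Nat.card_pos (α := G); lia)
    (fun ω : orbitRel.Quotient G X ↦ card_orbit_mul_ncard_stabilizer_sdiff hS ω.out) houter
  have hweight := sum_fixWeight_add_two hfix
  rw [sum_eq_sum_card_orbit_mul (G := G) fixWeight_smul] at hweight
  have outer_orbit {x : X}
      (hx : Nat.card (orbit G x) * (stabilizer G x \ S : Set G).ncard ≠ 0) :
      Even (Nat.card (stabilizer G x)) ∧ Nat.card (stabilizer G x) ≠ 4 ∧
        Nat.card (orbit G x) * fixWeight G x + Nat.card (orbit G x) = Nat.card G := by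
    obtain ⟨g, hg, hgS⟩ := Set.nonempty_of_ncard_ne_zero (right_ne_zero_of_mul hx)
    refine ⟨?_, hfour g hgS x hg, ?_⟩
    · exact two_mul_ncard_sdiff hS (fun h ↦ hgS (h hg)) ▸ even_two_mul _
    · rw [← card_orbit_mul_card_stabilizer (G := G) x,
        ← fixWeight_add_one fun u _ ↦ huni g hgS x hg u, mul_add_one]
  rcases eq_one_or_exists_eq_two_of_sum Nat.card_pos.ne'
    (fun ω : orbitRel.Quotient G X ↦ card_orbit_mul_card_stabilizer ω.out)
    (fun ω ↦ card_orbit_mul_fixWeight ω.out) hweight hij (outer_orbit hi) (outer_orbit hj)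
    with ⟨hi1, hj1⟩ | ⟨k, hk, hk1⟩
  · have : Nontrivial G := by
      rw [← Finite.one_lt_card_iff_nontrivial]
      have := Nat.card_pos (α := G)
      lia
    exact exists_invariant_pair_of_card_orbit_eq_one (mt Quotient.out_inj.1 hij) hi1 hj1
  · exact exists_invariant_pair_of_card_orbit_eq_two hk hk1

end FixedPoints

section FiniteField
variable {F : Type*} [Field F]

/-- The subring of multipliers of an additive subgroup. -/
def multiplierRing (V : AddSubgroup F) : Subring F where
  carrier := {e | ∀ v ∈ V, e * v ∈ V}
  mul_mem' he hf v hv := by rw [mul_assoc]; exact he _ (hf v hv)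
  one_mem' v hv := by rwa [one_mul]
  add_mem' he hf v hv := by rw [add_mul]; exact V.add_mem (he v hv) (hf v hv)
  zero_mem' v _ := by rw [zero_mul]; exact V.zero_mem
  neg_mem' he v hv := by rw [neg_mul]; exact V.neg_mem (he v hv)

theorem inv_mem_of_mem_subring [Finite F] (E : Subring F) {e : F} (he : e ∈ E) : e⁻¹ ∈ E := by
  have := Fintype.ofFinite F
  rcases eq_or_ne e 0 with rfl | he0
  · simp [E.zero_mem]
  · have hpow : e ^ (Fintype.card F - 2) * e = 1 := by
      rw [← pow_succ, ← FiniteField.pow_card_sub_one_eq_one e he0]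
      have := Fintype.one_lt_card (α := F)
      congr 1
      lia
    rw [← eq_inv_of_mul_eq_one_left hpow]
    exact E.pow_mem he _

theorem eq_top_of_not_isSquare_mul_mem [Finite F]
    (hF : ∀ E : Subfield F, E ≠ ⊤ → ∀ e ∈ E, IsSquare e) {V : AddSubgroup F} {b c : F}
    (hb : b ≠ 0) (hbV : b ∈ V) (hc : ¬ IsSquare c) (hcV : ∀ v ∈ V, c * v ∈ V) : V = ⊤ := by
  have hE : (⟨multiplierRing V, fun _ ↦ inv_mem_of_mem_subring _⟩ : Subfield F) = ⊤ := by
    by_contra hE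
    exact hc (hF _ hE c hcV)
  refine (AddSubgroup.eq_top_iff' V).2 fun v ↦ ?_
  have hvb : v * b⁻¹ ∈ (⟨multiplierRing V, fun _ ↦ inv_mem_of_mem_subring _⟩ : Subfield F) :=
    hE ▸ Subfield.mem_top _
  simpa [hb] using hvb b hbV

theorem isSquare_div_iff_isSquare_mul {a b : F} (hb : b ≠ 0) :
    IsSquare (a / b) ↔ IsSquare (a * b) := by
  rw [← mul_div_mul_right a b hb]
  exact ⟨fun h ↦ by simpa [hb] using h.mul (.mul_self b), fun h ↦ h.div (.mul_self b)⟩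

theorem isSquare_mul_of_not_isSquare [Finite F] {a b : F} (ha : ¬ IsSquare a)
    (hb : ¬ IsSquare b) : IsSquare (a * b) := by
  classical
  have := Fintype.ofFinite F
  have hne {c : F} (hc : ¬ IsSquare c) : c ≠ 0 := fun h ↦ hc (h ▸ IsSquare.zero)
  rw [← quadraticChar_one_iff_isSquare (mul_ne_zero (hne ha) (hne hb)), map_mul,
    quadraticChar_neg_one_iff_not_isSquare.2 ha, quadraticChar_neg_one_iff_not_isSquare.2 hb]
  norm_num

theorem isSquare_algebraMap_of_even_finrank {K : Type*} [Field K] [Algebra K F] [Finite F]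
    (hK : Even (Module.finrank K F)) (a : K) : IsSquare (algebraMap K F a) := by
  have := Fintype.ofFinite F
  have := Finite.of_injective _ (algebraMap K F).injective
  have := Fintype.ofFinite K
  by_cases hchar : ringChar F = 2
  · exact FiniteField.isSquare_of_char_two hchar _
  rcases eq_or_ne a 0 with rfl | ha0
  · exact map_zero (algebraMap K F) ▸ IsSquare.zero
  obtain ⟨m, hm⟩ := hK
  have hcard : Fintype.card F = Fintype.card K ^ m * Fintype.card K ^ m := by
    rw [Module.card_eq_pow_finrank (K := K), hm, pow_add]
  obtain ⟨s, hs⟩ : Odd (Fintype.card K ^ m) := Nat.Odd.of_mul_left <| hcard ▸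
    Nat.odd_iff.2 (FiniteField.odd_card_of_char_ne_two hchar)
  have hpow : a ^ (2 * s) = 1 := by
    have h := FiniteField.pow_card_pow m a
    rwa [hs, pow_succ, mul_eq_right₀ ha0] at h
  have hhalf : Fintype.card F / 2 = 2 * s * (s + 1) := by
    rw [hcard, hs]
    have : (2 * s + 1) * (2 * s + 1) = 2 * (2 * s * (s + 1)) + 1 := by ring
    lia
  rw [FiniteField.isSquare_iff hchar ((map_ne_zero _).2 ha0), hhalf, pow_mul, ← map_pow, hpow,
    map_one, one_pow]

theorem eq_top_of_finrank_eq_one {E : Subfield F}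
    (hE : Module.finrank E F = 1) : E = ⊤ :=
  top_le_iff.1 <| Subfield.relfinrank_eq_one_iff.1 <| by
    rwa [Subfield.relfinrank_top_right]

theorem isSquare_of_mem_subfield_ne_top [Finite F] {p n : ℕ} (hp : p.Prime)
    (hF : Nat.card F = p ^ 2 ^ n) {E : Subfield F} (hE : E ≠ ⊤) {e : F} (he : e ∈ E) :
    IsSquare e := by
  refine isSquare_algebraMap_of_even_finrank (K := E) ?_ ⟨e, he⟩
  have hcard := Module.natCard_eq_pow_finrank (K := E) (V := F)
  obtain ⟨d, -, hd⟩ := (Nat.dvd_prime_pow hp).1 <|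
    hF ▸ hcard ▸ dvd_pow_self (Nat.card E) Module.finrank_pos.ne'
  have hdvd : Module.finrank E F ∣ 2 ^ n := by
    rw [hF, hd, ← pow_mul] at hcard
    exact Dvd.intro_left d (Nat.pow_right_injective hp.two_le hcard).symm
  obtain ⟨j, -, hj⟩ := (Nat.dvd_prime_pow Nat.prime_two).1 hdvd
  have hj0 : j ≠ 0 := by
    rintro rfl
    exact hE (eq_top_of_finrank_eq_one hj)
  exact hj ▸ even_two.pow_of_ne_zero hj0

theorem ringChar_ne_two (F : Type*) [Field F] [NeZero (2 : F)] : ringChar F ≠ 2 := fun h ↦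
  two_ne_zero (α := F) (by exact_mod_cast (ringChar.spec F 2).2 h.dvd)

theorem exists_finite_isSquare_algebraMap (F : Type*) [Field F] [Finite F] :
    ∃ (L : Type) (_ : Field L) (_ : Algebra F L), Finite L ∧
      ∀ a : F, IsSquare (algebraMap F L a) := by
  obtain ⟨p, _⟩ := CharP.exists F
  have := Fact.mk (CharP.char_is_prime F p)
  refine ⟨FiniteField.Extension F p 2, inferInstance, inferInstance, inferInstance,
    isSquare_algebraMap_of_even_finrank ?_⟩
  rw [FiniteField.finrank_extension]
  exact even_two

end FiniteField

section PGL

variable {F : Type*} [Field F]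

theorem mk_mem_range_toPGL {A : GL (Fin 2) F} :
    mk A ∈ (SpecialLinearGroup.toPGL (n := Fin 2) (R := F)).range ↔ IsSquare A.val.det := by
  constructor
  · rintro ⟨B, hB⟩
    obtain ⟨u, rfl⟩ := mk_eq_mk_iff.1 hB
    exact ⟨u, by simp [pow_two]⟩
  · rintro ⟨u, hu⟩
    have hu0 : u ≠ 0 := by rintro rfl; exact A.det_ne_zero (by simpa using hu)
    refine ⟨⟨u⁻¹ • A.val, ?_⟩, mk_eq_mk_iff.2 ⟨Units.mk0 u hu0, ?_⟩⟩
    · rw [det_smul, hu, Fintype.card_fin, inv_pow, ← pow_two, inv_mul_cancel₀ (pow_ne_zero 2 hu0)]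
    · ext i j
      simpa [SpecialLinearGroup.toGL, mul_comm] using mul_inv_cancel_left₀ hu0 (A i j)

theorem index_range_toPGL [Finite F] {A : GL (Fin 2) F} (hA : ¬ IsSquare A.val.det) :
    (SpecialLinearGroup.toPGL (n := Fin 2) (R := F)).range.index = 2 := by
  refine Subgroup.index_eq_two_iff.2 ⟨mk A, fun B ↦ ?_⟩
  obtain ⟨B, rfl⟩ := mk_surjective B
  rw [← map_mul, mk_mem_range_toPGL, mk_mem_range_toPGL, Units.val_mul, det_mul]
  by_cases hB : IsSquare B.val.det
  · refine .inr ⟨hB, fun h ↦ hA ?_⟩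
    simpa [B.det_ne_zero] using h.div hB
  · exact .inl ⟨isSquare_mul_of_not_isSquare hB hA, hB⟩

theorem toGL_transvection_zero_one (b : F) :
    (SpecialLinearGroup.transvection (zero_ne_one (α := Fin 2)) b : GL (Fin 2) F) =
      upperRightHom b := by
  ext i j
  fin_cases i <;> fin_cases j <;> simp [SpecialLinearGroup.transvection_coe]

theorem mul_upperRightHom_of_apply_zero_zero_eq_zero {w : GL (Fin 2) F} (hw : w 0 0 = 0) (b : F) :
    w * upperRightHom b =
      SpecialLinearGroup.transvection (one_ne_zero (α := Fin 2)) (b * w 1 0 / w 0 1) * w := by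
  have hw01 : w 0 1 ≠ 0 := fun h ↦ w.det_ne_zero (by rw [det_fin_two, hw, h]; ring)
  have hcancel := div_mul_cancel₀ (b * w 1 0) hw01
  ext i j
  fin_cases i <;> fin_cases j <;>
    simp [SpecialLinearGroup.transvection_coe, Matrix.mul_apply, Fin.sum_univ_two, hw, hcancel,
      mul_comm (w 1 0), -Matrix.cons_mul]

theorem range_toPGL_le {M : Subgroup PGL(2, F)}
    (hup : ∀ b, mk (upperRightHom b : GL (Fin 2) F) ∈ M)
    {y : GL (Fin 2) F} (hyM : mk y ∈ M) (hy : y 1 0 ≠ 0) :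
    (SpecialLinearGroup.toPGL (n := Fin 2)).range ≤ M := by
  obtain ⟨w, hwM, hw00, hw10⟩ : ∃ w : GL (Fin 2) F, mk w ∈ M ∧ w 0 0 = 0 ∧ w 1 0 ≠ 0 := by
    refine ⟨upperRightHom (-(y 0 0 / y 1 0)) * y, ?_, ?_, ?_⟩
    · rw [map_mul]
      exact M.mul_mem (hup _) hyM
    · simp [Matrix.mul_apply, Fin.sum_univ_two, hy, -Matrix.cons_mul]
    · simpa [Matrix.mul_apply, Fin.sum_univ_two, -Matrix.cons_mul] using hy
  have hw01 : w 0 1 ≠ 0 := fun h ↦ w.det_ne_zero (by rw [det_fin_two, hw00, h]; ring)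
  have lower_mem (c : F) :
      mk (SpecialLinearGroup.transvection (one_ne_zero (α := Fin 2)) c : GL (Fin 2) F) ∈ M := by
    have h := mul_upperRightHom_of_apply_zero_zero_eq_zero hw00 (c * w 0 1 / w 1 0)
    rw [div_mul_cancel₀ _ hw10, mul_div_cancel_right₀ _ hw01] at h
    rw [← M.mul_mem_cancel_right hwM, ← map_mul, ← h, map_mul]
    exact M.mul_mem hwM (hup _)
  rintro _ ⟨A, rfl⟩
  refine SL2.transvection_induction (fun A ↦ SpecialLinearGroup.toPGL A ∈ M) ?_
    (fun B C hB hC ↦ by rw [map_mul]; exact M.mul_mem hB hC) A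
  intro i j hij c
  fin_cases i <;> fin_cases j
  · exact absurd rfl hij
  · exact (congrArg (mk · ∈ M) (toGL_transvection_zero_one c)).mpr (hup c)
  · exact lower_mem c
  · exact absurd rfl hij

/-- The subgroup of those `b` for which the translation `z ↦ z + b` lies in `M`. -/
def translations (M : Subgroup PGL(2, F)) : AddSubgroup F where
  carrier := {b | mk (upperRightHom b) ∈ M}
  add_mem' ha hb := by
    rw [Set.mem_ofPred, AddChar.map_add_eq_mul, map_mul]
    exact M.mul_mem ha hb
  zero_mem' := by
    rw [Set.mem_ofPred, AddChar.map_zero_eq_one, map_one]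
    exact M.one_mem
  neg_mem' hb := by
    rw [Set.mem_ofPred, AddChar.map_neg_eq_inv, map_inv]
    exact M.inv_mem hb

theorem div_mul_mem_translations {M : Subgroup PGL(2, F)} {g : GL (Fin 2) F} (hg : mk g ∈ M)
    (hg10 : g 1 0 = 0) {b : F} (hb : b ∈ translations M) : g 0 0 / g 1 1 * b ∈ translations M := by
  have hg11 : g 1 1 ≠ 0 := fun h ↦ g.det_ne_zero (by rw [det_fin_two, hg10, h]; ring)
  have hconj : g * upperRightHom b = upperRightHom (g 0 0 / g 1 1 * b) * g := by
    have hcancel : g 0 0 / g 1 1 * b * g 1 1 = g 0 0 * b := by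
      rw [mul_right_comm, div_mul_cancel₀ _ hg11]
    ext i j
    fin_cases i <;> fin_cases j <;>
      simp [Matrix.mul_apply, Fin.sum_univ_two, hg10, hcancel, add_comm, -Matrix.cons_mul]
  change mk _ ∈ M
  rw [← M.mul_mem_cancel_right hg, ← map_mul, ← hconj, map_mul]
  exact M.mul_mem hg hb

theorem eq_top_of_smul_infty [Finite F] [DecidableEq F]
    (hF : ∀ E : Subfield F, E ≠ ⊤ → ∀ e ∈ E, IsSquare e) {M : Subgroup PGL(2, F)}
    {u g y : GL (Fin 2) F} (hu : u.IsParabolic) (huM : mk u ∈ M) (hu10 : u • ∞ = (∞ : OnePoint F))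
    (hgM : mk g ∈ M) (hg10 : g • ∞ = (∞ : OnePoint F)) (hg : ¬ IsSquare g.val.det)
    (hyM : mk y ∈ M) (hy10 : y • ∞ ≠ (∞ : OnePoint F)) : M = ⊤ := by
  rw [OnePoint.smul_infty_eq_self_iff] at hu10 hg10
  rw [Ne, OnePoint.smul_infty_eq_self_iff] at hy10
  obtain ⟨hdiag, hu01⟩ := (GeneralLinearGroup.isParabolic_iff_of_upperTriangular hu10).1 hu
  have hu00 : u 0 0 ≠ 0 := fun h ↦ u.det_ne_zero (by rw [det_fin_two, hu10, h]; ring)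
  have htrans : u 0 1 / u 0 0 ∈ translations M := by
    have : mk (upperRightHom (u 0 1 / u 0 0)) = mk u := mk_eq_mk_iff.2
      ⟨Units.mk0 _ hu00, by
        ext i j
        fin_cases i <;> fin_cases j <;> simp [hu10, ← hdiag, hu00]⟩
    rwa [← this] at huM
  have hg11 : g 1 1 ≠ 0 := fun h ↦ g.det_ne_zero (by rw [det_fin_two, hg10, h]; ring)
  have hc : ¬ IsSquare (g 0 0 / g 1 1) := by
    rwa [isSquare_div_iff_isSquare_mul hg11, ← sub_zero (g 0 0 * g 1 1), ← mul_zero (g 0 1), ← hg10,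
      ← det_fin_two]
  have htop := eq_top_of_not_isSquare_mul_mem hF (div_ne_zero hu01 hu00) htrans hc
    fun v hv ↦ div_mul_mem_translations hgM hg10 hv
  have hup (b : F) : mk (upperRightHom b) ∈ M := (htop ▸ AddSubgroup.mem_top b : b ∈ translations M)
  exact eq_top_of_index_eq_two (index_range_toPGL hg) (range_toPGL_le hup hyM hy10)
    fun h ↦ hg (mk_mem_range_toPGL.1 (h hgM))

theorem exists_smul_infty_eq [DecidableEq F] (P : OnePoint F) :
    ∃ k : GL (Fin 2) F, k • (∞ : OnePoint F) = P := by
  cases P with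
  | infty => exact ⟨1, one_smul _ _⟩
  | coe c =>
    refine ⟨.mkOfDetNeZero !![c, 1; 1, 0] (by simp), ?_⟩
    simp [OnePoint.smul_infty_eq_ite, GeneralLinearGroup.mkOfDetNeZero]

theorem eq_top_of_smul_eq_self [Finite F] [DecidableEq F]
    (hF : ∀ E : Subfield F, E ≠ ⊤ → ∀ e ∈ E, IsSquare e) {M : Subgroup PGL(2, F)}
    {u g y : GL (Fin 2) F} (hu : u.IsParabolic) (huM : mk u ∈ M) (hgM : mk g ∈ M)
    (hg : ¬ IsSquare g.val.det) (hyM : mk y ∈ M) {P : OnePoint F} (huP : u • P = P)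
    (hgP : g • P = P) (hyP : y • P ≠ P) : M = ⊤ := by
  obtain ⟨k, rfl⟩ := exists_smul_infty_eq P
  have hmem {A : GL (Fin 2) F} (hA : mk A ∈ M) :
      mk (k⁻¹ * A * k) ∈ M.map (MulAut.conj (mk k)⁻¹).toMonoidHom :=
    ⟨mk A, hA, by simp⟩
  have htop : M.map (MulAut.conj (mk k)⁻¹).toMonoidHom = ⊤ := by
    refine eq_top_of_smul_infty hF (u := k⁻¹ * u * k) ?_ (hmem huM) ?_ (hmem hgM) ?_ ?_
      (hmem hyM) ?_
    · simpa using hu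
    · rw [mul_smul, mul_smul, huP, inv_smul_smul]
    · rw [mul_smul, mul_smul, hgP, inv_smul_smul]
    · rwa [Units.val_mul, Units.val_mul, det_units_conj']
    · rwa [mul_smul, mul_smul, Ne, inv_smul_eq_iff]
  exact Subgroup.map_injective (MulAut.conj _).injective
    (htop.trans (Subgroup.map_top_of_surjective _ (MulAut.conj _).surjective).symm)

end PGL

section FixedPointsOnLine

open MulAction

variable {K : Type*} [Field K]

theorem commute_fin_two_iff {R : Type*} [CommRing R] {A B : Matrix (Fin 2) (Fin 2) R} :
    Commute A B ↔ A 0 1 * B 1 0 = B 0 1 * A 1 0 ∧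
      A 0 1 * (B 0 0 - B 1 1) = B 0 1 * (A 0 0 - A 1 1) ∧
      A 1 0 * (B 0 0 - B 1 1) = B 1 0 * (A 0 0 - A 1 1) := by
  rw [Commute, SemiconjBy, ← Matrix.ext_iff]
  simp only [Fin.forall_fin_two, Matrix.mul_apply, Fin.sum_univ_two]
  grind

theorem exists_eq_smul_of_commute [NeZero (2 : K)] {S T : Matrix (Fin 2) (Fin 2) K}
    (hS : S.trace = 0) (hT : T.trace = 0) (hS0 : S ≠ 0) (h : Commute S T) : ∃ u : K, T = u • S := by
  have h2 : (2 : K) ≠ 0 := two_ne_zero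
  rw [trace_fin_two] at hS hT
  obtain ⟨h1, h2, h3⟩ := commute_fin_two_iff.1 h
  have hne : S 0 1 ≠ 0 ∨ S 1 0 ≠ 0 ∨ S 0 0 ≠ 0 := by
    by_contra! hne
    obtain ⟨hS01, hS10, hS00⟩ := hne
    rw [hS00, zero_add] at hS
    exact hS0 (by rw [S.eta_fin_two, hS00, hS01, hS10, hS]; exact (Matrix.eta_fin_two 0).symm)
  simp only [← Matrix.ext_iff, Fin.forall_fin_two, Matrix.smul_apply, smul_eq_mul]
  rcases hne with hne | hne | hne
  · exact ⟨T 0 1 / S 0 1, by grind⟩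
  · exact ⟨T 1 0 / S 1 0, by grind⟩
  · exact ⟨T 0 0 / S 0 0, by grind⟩

theorem discr_eq_discrim (A : Matrix (Fin 2) (Fin 2) K) :
    A.discr = discrim (A 1 0) (A 1 1 - A 0 0) (-A 0 1) := by
  rw [discr_fin_two, trace_fin_two, det_fin_two, discrim]
  ring

variable [DecidableEq K] {A B : GL (Fin 2) K}

theorem smul_coe_eq_self_iff {t : K} :
    A • (t : OnePoint K) = t ↔ A 1 0 * (t * t) + (A 1 1 - A 0 0) * t + -A 0 1 = 0 := by
  rw [← GeneralLinearGroup.fixpointPolynomial_aeval_eq_zero_iff]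
  simp [GeneralLinearGroup.fixpointPolynomial, sq, sub_eq_add_neg]

theorem isSquare_discr_of_smul_eq_self {P : OnePoint K} (h : A • P = P) : IsSquare A.val.discr := by
  rw [discr_eq_discrim]
  cases P with
  | infty =>
    rw [OnePoint.smul_infty_eq_self_iff] at h
    exact ⟨A 1 1 - A 0 0, by rw [discrim, h]; ring⟩
  | coe t =>
    rw [discrim_eq_sq_of_quadratic_eq_zero (smul_coe_eq_self_iff.1 h)]
    exact .sq _

theorem ncard_fixedBy_of_discr_eq_mul_self [NeZero (2 : K)] {s : K} (hs : s ≠ 0)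
    (hA : A.val.discr = s * s) : (fixedBy (OnePoint K) A).ncard = 2 := by
  rw [discr_eq_discrim] at hA
  rw [Set.ncard_eq_two]
  by_cases hc : A 1 0 = 0
  · have had : A 1 1 - A 0 0 ≠ 0 := by
      rintro h
      simp [discrim, hc, h, hs] at hA
    refine ⟨∞, ↑(A 0 1 / (A 1 1 - A 0 0)), by simp, ?_⟩
    ext P
    cases P with
    | infty => simp [OnePoint.smul_infty_eq_self_iff, hc]
    | coe t =>
      simp only [MulAction.mem_fixedBy, smul_coe_eq_self_iff, hc, Set.mem_insert_iff,
        Set.mem_singleton_iff, OnePoint.coe_ne_infty, OnePoint.some_eq_iff, eq_div_iff had]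
      grind
  · refine ⟨↑((-(A 1 1 - A 0 0) + s) / (2 * A 1 0)),
      ↑((-(A 1 1 - A 0 0) - s) / (2 * A 1 0)), ?_, ?_⟩
    · have : (2 : K) ≠ 0 := two_ne_zero
      rw [Ne, OnePoint.coe_eq_coe]
      field_simp
      grind
    ext P
    cases P with
    | infty => simp [OnePoint.smul_infty_eq_self_iff, hc]
    | coe t => simp [smul_coe_eq_self_iff, quadratic_eq_zero_iff hc hA]

theorem fixedBy_of_isParabolic [NeZero (2 : K)] (hA : A.IsParabolic) :
    fixedBy (OnePoint K) A = {A.parabolicFixedPoint} := by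
  ext P
  exact hA.smul_eq_self_iff

theorem commute_of_smul_eq_self {P Q : OnePoint K} (hPQ : P ≠ Q) (hAP : A • P = P) (hAQ : A • Q = Q)
    (hBP : B • P = P) (hBQ : B • Q = Q) : Commute A B := by
  rw [← Commute.units_val_iff, commute_fin_two_iff]
  cases P with
  | infty =>
    cases Q with
    | infty => exact absurd rfl hPQ
    | coe t =>
      rw [OnePoint.smul_infty_eq_self_iff] at hAP hBP
      rw [smul_coe_eq_self_iff] at hAQ hBQ
      grind
  | coe s =>
    cases Q with
    | infty =>
      rw [OnePoint.smul_infty_eq_self_iff] at hAQ hBQ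
      rw [smul_coe_eq_self_iff] at hAP hBP
      grind
    | coe t =>
      rw [smul_coe_eq_self_iff] at hAP hBP hAQ hBQ
      have hst : s - t ≠ 0 := sub_ne_zero.2 fun h ↦ hPQ (h ▸ rfl)
      grind

end FixedPointsOnLine

section TracelessMatrices

variable {F : Type*} [Field F] {A B : GL (Fin 2) F}

theorem mk_eq_one_iff_apply :
    mk A = 1 ↔ A 0 1 = 0 ∧ A 1 0 = 0 ∧ A 0 0 = A 1 1 := by
  rw [ProjGenLinGroup.mk_eq_one, GeneralLinearGroup.mem_center_iff_val_mem_range_scalar]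
  constructor
  · rintro ⟨c, hc⟩
    simp [← hc]
  · rintro ⟨h01, h10, h00⟩
    refine ⟨A 1 1, ?_⟩
    ext i j
    fin_cases i <;> fin_cases j <;> simp [h01, h10, h00]

theorem mk_eq_mk_of_eq_smul {c : F} (h : B.val = c • A.val) : mk A = mk B := by
  have hc : c ≠ 0 := by
    rintro rfl
    exact B.det_ne_zero (by simp [h])
  refine mk_eq_mk_iff.2 ⟨Units.mk0 c hc, Units.ext ?_⟩
  simp [h, smul_eq_mul_diagonal]

theorem exists_eq_smul_of_mk_eq_mk (h : mk A = mk B) :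
    ∃ c : F, B.val = c • A.val := by
  obtain ⟨u, rfl⟩ := mk_eq_mk_iff.1 h
  exact ⟨u, by simp [smul_eq_mul_diagonal]⟩

theorem mk_sq_eq_one_iff (hA : mk A ≠ 1) : mk A ^ 2 = 1 ↔ A.val.trace = 0 := by
  rw [Ne, mk_eq_one_iff_apply] at hA
  rw [pow_two, ← map_mul, mk_eq_one_iff_apply, trace_fin_two]
  simp only [Units.val_mul, Matrix.mul_apply, Fin.sum_univ_two]
  grind

theorem sq_eq_one_of_pow_four_eq_one [NeZero (2 : F)] (h2 : IsSquare (2 : F))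
    (hA : ¬ IsSquare A.val.det) (h : mk A ^ 4 = 1) : mk A ^ 2 = 1 := by
  by_contra hsq
  have htrace := (mk_sq_eq_one_iff (A := A ^ 2) (by rwa [map_pow])).1 (by rwa [map_pow, ← pow_mul])
  have h20 : (2 : F) ≠ 0 := two_ne_zero
  have hdet : A.val.det = A.val.trace ^ 2 / 2 := by
    rw [Units.val_pow_eq_pow_val, pow_two, trace_fin_two, Matrix.mul_apply, Matrix.mul_apply,
      Fin.sum_univ_two, Fin.sum_univ_two] at htrace
    rw [eq_div_iff h20, det_fin_two, trace_fin_two]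
    linear_combination -htrace
  exact hA (hdet ▸ (IsSquare.sq _).div h2)

theorem mk_eq_mk_of_commute [NeZero (2 : F)] (hA : A.val.trace = 0) (hB : B.val.trace = 0)
    (h : Commute A B) : mk A = mk B := by
  obtain ⟨c, hc⟩ := exists_eq_smul_of_commute hA hB A.ne_zero (Commute.units_val_iff.2 h)
  exact mk_eq_mk_of_eq_smul hc

theorem discr_ne_zero_of_not_isSquare_det [NeZero (2 : F)] (hA : ¬ IsSquare A.val.det) :
    A.val.discr ≠ 0 := by
  intro h
  have h2 : (2 : F) ≠ 0 := two_ne_zero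
  refine hA ⟨A.val.trace / 2, ?_⟩
  rw [discr_fin_two] at h
  field_simp
  linear_combination -h

theorem discr_ne_zero_of_trace_eq_zero [NeZero (2 : F)] (hA : A.val.trace = 0) :
    A.val.discr ≠ 0 := by
  have h4 : (4 : F) ≠ 0 := by
    rw [← Nat.cast_ofNat, show 4 = 2 * 2 by rfl, Nat.cast_mul, Nat.cast_ofNat]
    exact mul_ne_zero two_ne_zero two_ne_zero
  rw [discr_fin_two, hA, zero_pow two_ne_zero, zero_sub]
  exact neg_ne_zero.2 (mul_ne_zero h4 A.det_ne_zero)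

end TracelessMatrices

section ProjectiveLine

open MulAction (fixedBy)

variable {F L : Type*} [Field F] [Field L] [Algebra F L]

theorem neZero_two_of_algebra (F L : Type*) [Field F] [Field L] [Algebra F L] [NeZero (2 : F)] :
    NeZero (2 : L) :=
  map_ofNat (algebraMap F L) 2 ▸ NeZero.of_injective (algebraMap F L).injective

theorem discr_map (A : GL (Fin 2) F) :
    (A.map (algebraMap F L)).val.discr = algebraMap F L A.val.discr := by
  simp [discr_fin_two, trace_fin_two, det_fin_two, map_ofNat]

variable [DecidableEq L]

theorem scalar_smul (u : Lˣ) (P : OnePoint L) : GeneralLinearGroup.scalar (Fin 2) u • P = P := by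
  cases P <;> simp [OnePoint.smul_infty_eq_ite, OnePoint.smul_some_eq_ite]

/-- The action of `PGL(2, F)` by Möbius transformations on the projective line over an
extension `L` of `F`. -/
instance projectiveLineAction : MulAction PGL(2, F) (OnePoint L) :=
  letI : MulAction PGL(2, L) (OnePoint L) := ProjGenLinGroup.mulActionOfGL scalar_smul
  MulAction.compHom _ (ProjGenLinGroup.map (algebraMap F L))

theorem mk_smul_eq (A : GL (Fin 2) F) (P : OnePoint L) : mk A • P = A.map (algebraMap F L) • P :=
  rfl

theorem ncard_fixedBy_of_discr_ne_zero [NeZero (2 : L)] {A : GL (Fin 2) F}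
    (h : IsSquare (algebraMap F L A.val.discr)) (hA : A.val.discr ≠ 0) :
    (fixedBy (OnePoint L) (mk A)).ncard = 2 := by
  obtain ⟨s, hs⟩ := h
  refine ncard_fixedBy_of_discr_eq_mul_self (A := A.map (algebraMap F L)) (s := s) ?_
    (by rwa [discr_map])
  rintro rfl
  simp [hA] at hs

theorem isParabolic_of_discr_eq_zero {A : GL (Fin 2) F} (hA : mk A ≠ 1) (h : A.val.discr = 0) :
    A.IsParabolic :=
  ⟨fun hmem ↦ hA <| ProjGenLinGroup.mk_eq_one.2 <|
    GeneralLinearGroup.mem_center_iff_val_mem_range_scalar.2 hmem, h⟩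

theorem fixedBy_of_discr_eq_zero [DecidableEq F] [NeZero (2 : F)] {A : GL (Fin 2) F}
    (hA : mk A ≠ 1) (h : A.val.discr = 0) :
    fixedBy (OnePoint L) (mk A) = {OnePoint.map (algebraMap F L) A.parabolicFixedPoint} := by
  have := neZero_two_of_algebra F L
  have hAL : (A.map (algebraMap F L)).IsParabolic := by
    refine isParabolic_of_discr_eq_zero (fun h1 ↦ hA ?_) (by rw [discr_map, h, map_zero])
    rw [mk_eq_one_iff_apply] at h1 ⊢
    simpa using h1
  have hfix : A • A.parabolicFixedPoint = A.parabolicFixedPoint :=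
    (isParabolic_of_discr_eq_zero hA h).smul_eq_self_iff.2 rfl
  have hmem : OnePoint.map (algebraMap F L) A.parabolicFixedPoint ∈
      fixedBy (OnePoint L) (mk A) := by
    rw [MulAction.mem_fixedBy, mk_smul_eq, ← OnePoint.map_smul, hfix]
  have hsingle := fixedBy_of_isParabolic hAL
  change fixedBy (OnePoint L) (mk A) = _ at hsingle
  rw [hsingle, Set.mem_singleton_iff] at hmem
  rw [hsingle, hmem]

theorem commute_of_mk_smul_eq_self {A B : GL (Fin 2) F} {P Q : OnePoint L} (hPQ : P ≠ Q)
    (hAP : mk A • P = P) (hAQ : mk A • Q = Q) (hBP : mk B • P = P) (hBQ : mk B • Q = Q) :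
    Commute A B := by
  have h := Commute.units_val_iff.2 (commute_of_smul_eq_self (A := A.map (algebraMap F L))
    (B := B.map (algebraMap F L)) hPQ hAP hAQ hBP hBQ)
  refine Commute.units_val_iff.1 (Matrix.map_injective (algebraMap F L).injective ?_)
  simpa only [Matrix.map_mul] using! h.eq

theorem mk_eq_mk_of_smul_eq_self [NeZero (2 : F)] {A B : GL (Fin 2) F} (hA : A.val.trace = 0)
    (hB : B.val.trace = 0) (hdiscr : IsSquare (algebraMap F L A.val.discr))
    (hAB : Commute (mk A) (mk B)) {P : OnePoint L} (hAP : mk A • P = P) (hBP : mk B • P = P) :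
    mk A = mk B := by
  have := neZero_two_of_algebra F L
  have hdet : A.val.discr ≠ 0 := discr_ne_zero_of_trace_eq_zero hA
  obtain ⟨Q, hQP, hAQ⟩ : ∃ Q ≠ P, mk A • Q = Q := by
    obtain ⟨Q, hQ, hQP⟩ := Set.exists_ne_of_one_lt_ncard
      (ncard_fixedBy_of_discr_ne_zero hdiscr hdet ▸ one_lt_two) P
    exact ⟨Q, hQP, hQ⟩
  have hBQ : mk B • Q = Q := by
    obtain ⟨R, S, -, hset⟩ := Set.ncard_eq_two.1 (ncard_fixedBy_of_discr_ne_zero hdiscr hdet)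
    have hmem {T : OnePoint L} : mk A • T = T ↔ T = R ∨ T = S := by
      rw [← MulAction.mem_fixedBy, hset]; rfl
    have h1 : mk A • mk B • Q = mk B • Q := by rw [← mul_smul, hAB.eq, mul_smul, hAQ]
    have h2 : mk B • Q ≠ P := fun h ↦ hQP (smul_left_cancel (mk B) (h.trans hBP.symm))
    grind
  exact mk_eq_mk_of_commute hA hB (commute_of_mk_smul_eq_self hQP hAQ hAP hBQ hBP)

end ProjectiveLine

section InvariantPair

open MulAction (fixedBy stabilizer)

variable {F L : Type*} [Field F] [Field L] [DecidableEq L] [Algebra F L]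

/-- Twice the projection of `A` to the matrices of trace zero; the factor `2` keeps the definition
free of division. -/
def twiceTracelessPart (A : Matrix (Fin 2) (Fin 2) F) : Matrix (Fin 2) (Fin 2) F :=
  (2 : F) • A - A.trace • 1

theorem trace_twiceTracelessPart (A : Matrix (Fin 2) (Fin 2) F) :
    (twiceTracelessPart A).trace = 0 := by
  simp only [twiceTracelessPart, trace_sub, trace_smul, trace_one, Fintype.card_fin, smul_eq_mul]
  push_cast
  ring

theorem det_twiceTracelessPart (A : Matrix (Fin 2) (Fin 2) F) :
    (twiceTracelessPart A).det = -A.discr := by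
  simp only [twiceTracelessPart, discr_fin_two, det_fin_two, trace_fin_two, Matrix.sub_apply,
    Matrix.smul_apply, one_apply, smul_eq_mul]
  grind

theorem twiceTracelessPart_conj (B : GL (Fin 2) F) (A : Matrix (Fin 2) (Fin 2) F) :
    twiceTracelessPart (B.val * A * B⁻¹.val) = B.val * twiceTracelessPart A * B⁻¹.val := by
  simp only [twiceTracelessPart, trace_units_conj, mul_sub, sub_mul, mul_smul_comm, smul_mul_assoc,
    mul_one, Units.mul_inv]

theorem commute_twiceTracelessPart_right {A B : Matrix (Fin 2) (Fin 2) F} (h : Commute A B) :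
    Commute A (twiceTracelessPart B) :=
  (h.smul_right 2).sub_right ((Commute.one_right A).smul_right _)

theorem fixedBy_ne_singleton [Finite F] [NeZero (2 : F)]
    (hF : ∀ E : Subfield F, E ≠ ⊤ → ∀ e ∈ E, IsSquare e) {M : Subgroup PGL(2, F)} (hM : M ≠ ⊤)
    {y g u : GL (Fin 2) F} (hyM : mk y ∈ M) (hy : ¬ IsSquare y.val.discr)
    (hgM : mk g ∈ M) (hg : ¬ IsSquare g.val.det) (huM : mk u ∈ M)
    (hu : IsSquare (algebraMap F L u.val.discr)) {P : OnePoint L} (hgP : mk g • P = P) :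
    fixedBy (OnePoint L) (mk u) ≠ {P} := by
  classical
  intro hfix
  have := neZero_two_of_algebra F L
  have hdiscr : u.val.discr = 0 := by
    by_contra hne
    simpa [hfix] using ncard_fixedBy_of_discr_ne_zero hu hne
  have hu1 : mk u ≠ 1 := by
    intro h1
    rw [h1, MulAction.fixedBy_one_eq_univ] at hfix
    have (Q : OnePoint L) : Q = P := by simpa using hfix.subset (Set.mem_univ Q)
    exact OnePoint.coe_ne_infty (0 : L) ((this _).trans (this _).symm)
  rw [fixedBy_of_discr_eq_zero hu1 hdiscr, Set.singleton_eq_singleton_iff] at hfix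
  obtain rfl := hfix
  have hpar := isParabolic_of_discr_eq_zero hu1 hdiscr
  have hgP0 : g • u.parabolicFixedPoint = u.parabolicFixedPoint :=
    Option.map_injective (algebraMap F L).injective
      (by rwa [mk_smul_eq, ← OnePoint.map_smul] at hgP)
  exact hM <| eq_top_of_smul_eq_self hF hpar huM hgM hg hyM (hpar.smul_eq_self_iff.2 rfl) hgP0
    fun h ↦ hy (isSquare_discr_of_smul_eq_self h)

instance finitePGL [Finite F] : Finite PGL(2, F) := .of_surjective _ mk_surjective

theorem card_ne_four_of_smul_eq_self [Finite F] [NeZero (2 : F)] (h2 : IsSquare (2 : F))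
    (hL : ∀ a : F, IsSquare (algebraMap F L a)) {K : Subgroup PGL(2, F)} {P : OnePoint L}
    (hK : ∀ k ∈ K, k • P = P) {g : GL (Fin 2) F} (hg : ¬ IsSquare g.val.det) (hgK : mk g ∈ K) :
    Nat.card K ≠ 4 := by
  intro hcard
  have hcomm := IsPGroup.isMulCommutative_of_card_eq_prime_sq (p := 2) hcard
  have hncard := two_mul_ncard_sdiff (H := K) (index_range_toPGL hg)
    fun h ↦ hg (mk_mem_range_toPGL.1 (h hgK))
  obtain ⟨g₁, g₂, hne, hset⟩ := Set.ncard_eq_two.1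
    (Nat.eq_of_mul_eq_mul_left two_pos (hncard.trans hcard))
  obtain ⟨A, rfl⟩ := mk_surjective g₁
  obtain ⟨B, rfl⟩ := mk_surjective g₂
  have traceless {C : GL (Fin 2) F} (hC : mk C ∈ K ∧ mk C ∉ SpecialLinearGroup.toPGL.range) :
      C.val.trace = 0 := by
    have h4 : mk C ^ 4 = 1 := hcard ▸ congrArg Subtype.val (pow_card_eq_one' (x := (⟨_, hC.1⟩ : K)))
    exact (mk_sq_eq_one_iff fun h ↦ hC.2 (h ▸ one_mem _)).1
      (sq_eq_one_of_pow_four_eq_one h2 (mt mk_mem_range_toPGL.2 hC.2) h4)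
  obtain ⟨hA, hB⟩ := Set.pair_subset_iff.1 hset.ge
  refine hne (mk_eq_mk_of_smul_eq_self (traceless hA) (traceless hB) (hL _) ?_ (hK _ hA.1)
    (hK _ hB.1))
  exact congrArg Subtype.val (hcomm.is_comm.comm ⟨_, hA.1⟩ ⟨_, hB.1⟩)

theorem card_stabilizer_ne_four [Finite F] [NeZero (2 : F)] (h2 : IsSquare (2 : F))
    (hL : ∀ a : F, IsSquare (algebraMap F L a)) {M : Subgroup PGL(2, F)} {P : OnePoint L} {g : M}
    (hg : g ∉ SpecialLinearGroup.toPGL.range.subgroupOf M) (hgP : g • P = P) :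
    Nat.card (stabilizer M P) ≠ 4 := by
  obtain ⟨g, hgM⟩ := g
  obtain ⟨A, rfl⟩ := mk_surjective g
  rw [← Subgroup.card_map_of_injective M.subtype_injective]
  refine card_ne_four_of_smul_eq_self h2 hL (P := P) ?_ (mt mk_mem_range_toPGL.2 hg)
    ⟨⟨mk A, hgM⟩, hgP, rfl⟩
  rintro _ ⟨k, hk, rfl⟩
  exact hk

theorem exists_le_centralizer_of_smul_pair_eq [NeZero (2 : F)] {M : Subgroup PGL(2, F)}
    {P Q : OnePoint L} (hPQ : P ≠ Q)
    (hM : ∀ h ∈ M, h • ({P, Q} : Set (OnePoint L)) = {P, Q}) {A : GL (Fin 2) F}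
    (hA : mk A ≠ 1) (hAP : mk A • P = P) (hAQ : mk A • Q = Q) :
    ∃ T : GL (Fin 2) F, T.val.trace = 0 ∧ M ≤ Subgroup.centralizer {mk T} := by
  classical
  have hdiscr : A.val.discr ≠ 0 := by
    intro h
    have hfix := fixedBy_of_discr_eq_zero (L := L) hA h
    exact hPQ ((hfix.subset hAP).trans (hfix.subset hAQ).symm)
  refine ⟨.mkOfDetNeZero (twiceTracelessPart A.val) ?_, trace_twiceTracelessPart _, fun h hh ↦ ?_⟩
  · rwa [det_twiceTracelessPart, neg_ne_zero]
  obtain ⟨B, rfl⟩ := mk_surjective h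
  set T := GeneralLinearGroup.mkOfDetNeZero (twiceTracelessPart A.val) _
  have fixes_conj {R : OnePoint L} (hR : R ∈ ({P, Q} : Set (OnePoint L))) :
      mk (B * A * B⁻¹) • R = R := by
    rw [← hM _ hh] at hR
    obtain ⟨S, hS, rfl⟩ := hR
    have hAS : mk A • S = S := by
      rcases hS with rfl | rfl <;> assumption
    simp only [map_mul, map_inv, mul_smul, inv_smul_smul, hAS]
  have hcomm : Commute A (B * A * B⁻¹) := commute_of_mk_smul_eq_self hPQ hAP hAQ
    (fixes_conj (Set.mem_insert _ _)) (fixes_conj (Set.mem_insert_of_mem _ rfl))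
  have hconj : (B * T * B⁻¹).val = twiceTracelessPart (B * A * B⁻¹).val :=
    (twiceTracelessPart_conj B A.val).symm
  have hmk : mk T = mk (B * T * B⁻¹) := by
    refine mk_eq_mk_of_commute (trace_twiceTracelessPart _) ?_ (Commute.units_val_iff.1 ?_)
    · rw [hconj, trace_twiceTracelessPart]
    · rw [hconj]
      exact commute_twiceTracelessPart_right (commute_twiceTracelessPart_right
        (Commute.units_val_iff.2 hcomm).symm).symm
  rw [Subgroup.mem_centralizer_singleton_iff]
  nth_rw 2 [hmk]
  simp

end InvariantPair

section Centralizer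

open MulAction (fixedBy)

variable {F : Type*} [Field F] [NeZero (2 : F)]

theorem ncard_fixedBy_eq_one_or_two {L : Type*} [Field L] [DecidableEq L] [Algebra F L]
    (hL : ∀ a : F, IsSquare (algebraMap F L a)) {g : PGL(2, F)} (hg : g ≠ 1) :
    (fixedBy (OnePoint L) g).ncard = 1 ∨ (fixedBy (OnePoint L) g).ncard = 2 := by
  classical
  have := neZero_two_of_algebra F L
  obtain ⟨A, rfl⟩ := mk_surjective g
  by_cases h : A.val.discr = 0
  · rw [fixedBy_of_discr_eq_zero hg h]
    exact .inl (Set.ncard_singleton _)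
  · exact .inr (ncard_fixedBy_of_discr_ne_zero (hL _) h)

theorem isSquare_det_of_isSquare_discr (hneg : IsSquare (-1 : F)) {A : Matrix (Fin 2) (Fin 2) F}
    (hA : A.trace = 0) (h : IsSquare A.discr) : IsSquare A.det := by
  have hdet : A.det = -1 * A.discr / (2 * 2) := by
    have h2 : (2 : F) ≠ 0 := two_ne_zero
    rw [discr_fin_two, hA]
    field_simp
    norm_num
  exact hdet ▸ (hneg.mul h).div (.mul_self 2)

theorem exists_le_centralizer [Finite F] (hneg : IsSquare (-1 : F)) (h2 : IsSquare (2 : F))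
    (hF : ∀ E : Subfield F, E ≠ ⊤ → ∀ e ∈ E, IsSquare e) {M : Subgroup PGL(2, F)} (hM : M ≠ ⊤)
    {X : GL (Fin 2) F} (hXM : mk X ∈ M) (hX : ¬ IsSquare X.val.det) (htrace : X.val.trace = 0) :
    ∃ T : GL (Fin 2) F, T.val.trace = 0 ∧ M ≤ Subgroup.centralizer {mk T} := by
  classical
  obtain ⟨L, _, _, _, hL⟩ := exists_finite_isSquare_algebraMap F
  have : Finite (OnePoint L) := inferInstanceAs (Finite (Option L))
  have := neZero_two_of_algebra F L
  have hindex : (SpecialLinearGroup.toPGL.range.subgroupOf M).index = 2 :=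
    relIndex_eq_two_of_index_eq_two (index_range_toPGL hX)
      fun h ↦ hX (mk_mem_range_toPGL.1 (h hXM))
  have hfix (g : M) (hg : g ≠ 1) :
      (fixedBy (OnePoint L) g).ncard = 1 ∨ (fixedBy (OnePoint L) g).ncard = 2 :=
    ncard_fixedBy_eq_one_or_two hL fun h ↦ hg (Subtype.ext h)
  have hout : ∀ g ∉ SpecialLinearGroup.toPGL.range.subgroupOf M,
      (fixedBy (OnePoint L) g).ncard = 2 := by
    rintro ⟨g, hgM⟩ hgS
    obtain ⟨A, rfl⟩ := mk_surjective g
    exact ncard_fixedBy_of_discr_ne_zero (hL _)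
      (discr_ne_zero_of_not_isSquare_det (mt mk_mem_range_toPGL.2 hgS))
  have huni : ∀ g ∉ SpecialLinearGroup.toPGL.range.subgroupOf M, ∀ P : OnePoint L, g • P = P →
      ∀ u : M, fixedBy (OnePoint L) u ≠ {P} := by
    rintro ⟨g, hgM⟩ hgS P hgP ⟨u, huM⟩
    obtain ⟨A, rfl⟩ := mk_surjective g
    obtain ⟨B, rfl⟩ := mk_surjective u
    exact fixedBy_ne_singleton hF hM hXM (mt (isSquare_det_of_isSquare_discr hneg htrace) hX) hgM
      (mt mk_mem_range_toPGL.2 hgS) huM (hL _) hgP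
  obtain ⟨P, Q, hPQ, hinv, ⟨⟨g, hgM⟩, hg1, hgP, hgQ⟩⟩ :=
    exists_invariant_pair hindex hfix hout huni fun _ hgS _ ↦ card_stabilizer_ne_four h2 hL hgS
  obtain ⟨A, rfl⟩ := mk_surjective g
  exact exists_le_centralizer_of_smul_pair_eq hPQ (fun h hh ↦ hinv ⟨h, hh⟩)
    (fun h ↦ hg1 (Subtype.ext h)) hgP hgQ

theorem centralizer_ne_top {T : GL (Fin 2) F} (hT : T.val.trace = 0) :
    Subgroup.centralizer {mk T} ≠ ⊤ := by
  intro h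
  have hcomm : mk (upperRightHom 1 : GL (Fin 2) F) ∈ Subgroup.centralizer {mk T} :=
    h ▸ Subgroup.mem_top _
  have h20 : (2 : F) ≠ 0 := two_ne_zero
  rw [Subgroup.mem_centralizer_singleton_iff, ← map_mul, ← map_mul, mk_eq_mk_iff] at hcomm
  obtain ⟨u, hu⟩ := hcomm
  have hu := congrArg Units.val hu
  have hdet := T.det_ne_zero
  rw [trace_fin_two] at hT
  rw [det_fin_two] at hdet
  obtain ⟨⟨h00, h01⟩, h10, h11⟩ :
      ((T 0 0 + T 1 0) * u.val = T 0 0 ∧ (T 0 1 + T 1 1) * u.val = T 0 0 + T 0 1) ∧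
        T 1 0 * u.val = T 1 0 ∧ T 1 1 * u.val = T 1 0 + T 1 1 := by
    simpa [← Matrix.ext_iff, Fin.forall_fin_two, Matrix.mul_apply, Fin.sum_univ_two,
      -Matrix.cons_mul] using hu
  have hc : T 1 0 = 0 := by
    by_contra hc
    have := (mul_eq_left₀ hc).1 h10
    grind
  have hu : u.val = 1 := by
    rw [hc, add_zero] at h00
    exact (mul_eq_left₀ (by grind)).1 h00
  grind

end Centralizer

section Dihedral

open Multiplicative (ofAdd toAdd)

variable {G : Type*} [Group G]

/-- The homomorphism out of a dihedral group given by the image `ρ` of its rotations and the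
image `s` of the reflection `sr 0`. -/
def dihedralHom {n : ℕ} (ρ : Multiplicative (ZMod n) →* G) (s : G) (hs : s * s = 1)
    (hρ : ∀ i, ρ i * s = s * (ρ i)⁻¹) : DihedralGroup n →* G :=
  MonoidHom.mk' (fun
    | .r i => ρ (ofAdd i)
    | .sr i => s * ρ (ofAdd i)) <| by
    rintro (i | i) (j | j)
    · exact map_mul ρ _ _
    · simp only [DihedralGroup.r_mul_sr, ← mul_assoc, hρ]
      rw [mul_assoc, sub_eq_neg_add, ofAdd_add, map_mul, ofAdd_neg, map_inv]
    · simp only [DihedralGroup.sr_mul_r, ofAdd_add, map_mul, mul_assoc]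
    · simp only [DihedralGroup.sr_mul_sr]
      rw [mul_assoc, ← mul_assoc (ρ _), hρ, ← mul_assoc, ← mul_assoc, hs, one_mul, sub_eq_neg_add,
        ofAdd_add, map_mul, ofAdd_neg, map_inv]

theorem dihedralHom_bijective {n : ℕ} {ρ : Multiplicative (ZMod n) →* G} {s : G} {hs : s * s = 1}
    {hρ : ∀ i, ρ i * s = s * (ρ i)⁻¹} (hinj : Function.Injective ρ) (hindex : ρ.range.index = 2)
    (hsρ : s ∉ ρ.range) : Function.Bijective (dihedralHom ρ s hs hρ) := by
  constructor
  · rw [injective_iff_map_eq_one]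
    rintro (i | i) h
    · exact congrArg (DihedralGroup.r ∘ toAdd) ((map_eq_one_iff ρ hinj).1 h)
    · exact absurd ⟨_, (eq_inv_of_mul_eq_one_left h).symm ▸ map_inv ρ (ofAdd i)⟩ hsρ
  · intro g
    by_cases hg : g ∈ ρ.range
    · obtain ⟨i, rfl⟩ := hg
      exact ⟨.r i.toAdd, rfl⟩
    · obtain ⟨i, hi⟩ := (Subgroup.mul_mem_iff_of_index_two hindex).2 (iff_of_false hsρ hg)
      refine ⟨.sr i.toAdd, ?_⟩
      change s * ρ i = g
      rw [hi, ← mul_assoc, hs, one_mul]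

theorem nonempty_mulEquiv_dihedralGroup {T : Subgroup G} [IsCyclic T] (hT : T.index = 2)
    (hsq : ∀ g ∉ T, g * g = 1) : Nonempty (G ≃* DihedralGroup (Nat.card T)) := by
  obtain ⟨s, hs⟩ : ∃ s, s ∉ T := by
    by_contra! h
    simp [(Subgroup.eq_top_iff' T).2 h] at hT
  let ρ : Multiplicative (ZMod (Nat.card T)) →* G :=
    T.subtype.comp (zmodCyclicMulEquiv ‹IsCyclic T›).toMonoidHom
  have hrange : ρ.range = T := by
    rw [MonoidHom.range_comp, MonoidHom.range_eq_top.2 (MulEquiv.surjective _),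
      ← MonoidHom.range_eq_map, T.range_subtype]
  have hρ (i) : ρ i * s = s * (ρ i)⁻¹ := by
    have hmem : ρ i ∈ T := hrange.le ⟨i, rfl⟩
    have h := hsq (s * ρ i) (mt (T.mul_mem_cancel_right hmem).1 hs)
    rw [eq_mul_inv_iff_mul_eq, ← mul_right_inj s, hsq s hs]
    simpa only [mul_assoc] using h
  have hbij : Function.Bijective (dihedralHom ρ s (hsq s hs) hρ) :=
    dihedralHom_bijective (T.subtype_injective.comp (MulEquiv.injective _)) (by rwa [hrange])
      (by rwa [hrange])
  exact ⟨(MulEquiv.ofBijective _ hbij).symm⟩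

end Dihedral

theorem isCyclic_range_of_ker_le {G H K : Type*} [Group G] [Group H] [Group K] {f : G →* H}
    {χ : G →* K} [IsCyclic χ.range] (h : χ.ker ≤ f.ker) : IsCyclic f.range := by
  obtain ⟨⟨_, g, rfl⟩, hg⟩ := IsCyclic.exists_generator (α := χ.range)
  refine ⟨⟨f g, g, rfl⟩, ?_⟩
  rintro ⟨_, z, rfl⟩
  obtain ⟨k, hk⟩ := Subgroup.mem_zpowers_iff.1 (hg ⟨χ z, z, rfl⟩)
  have hk : χ (g ^ k) = χ z := by simpa using congrArg Subtype.val hk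
  refine Subgroup.mem_zpowers_iff.2 ⟨k, Subtype.ext ?_⟩
  have hf : f (g ^ k) = f z := (f.eq_iff).2 (h ((χ.eq_iff).1 hk))
  simpa using hf

section Torus

variable {F : Type*} [Field F] {A T : GL (Fin 2) F}

/-- The image in `PGL(2, F)` of the centralizer of `T`, a torus when `T` is regular
semisimple. -/
def torus (T : GL (Fin 2) F) : Subgroup PGL(2, F) :=
  (Subgroup.centralizer {T}).map mk

theorem mk_mem_torus_iff : mk A ∈ torus T ↔ Commute A T := by
  constructor
  · rintro ⟨B, hB, hBA⟩
    obtain ⟨u, rfl⟩ := mk_eq_mk_iff.1 hBA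
    exact Commute.mul_left (Subgroup.mem_centralizer_singleton_iff.1 hB)
      (GeneralLinearGroup.scalar_commute u T)
  · exact fun h ↦ ⟨A, Subgroup.mem_centralizer_singleton_iff.2 h.eq, rfl⟩

theorem torus_le_centralizer : torus T ≤ Subgroup.centralizer {mk T} := by
  intro g hg
  obtain ⟨A, rfl⟩ := mk_surjective g
  rw [Subgroup.mem_centralizer_singleton_iff, ← map_mul, ← map_mul, (mk_mem_torus_iff.1 hg).eq]

theorem commute_or_mul_eq_neg (h : mk A ∈ Subgroup.centralizer {mk T}) :
    Commute A T ∨ A * T = -(T * A) := by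
  rw [Subgroup.mem_centralizer_singleton_iff, ← map_mul, ← map_mul] at h
  obtain ⟨u, hu⟩ := exists_eq_smul_of_mk_eq_mk h
  rw [Units.val_mul, Units.val_mul] at hu
  have hdet := congrArg det hu
  rw [det_smul, Fintype.card_fin, det_mul, det_mul, mul_comm (T.val.det),
    right_eq_mul₀ (mul_ne_zero A.det_ne_zero T.det_ne_zero), sq_eq_one_iff] at hdet
  rcases hdet with hu1 | hu1
  · rw [hu1, one_smul] at hu
    exact .inl (Units.ext hu.symm)
  · rw [hu1, neg_one_smul] at hu
    exact .inr (Units.ext (neg_eq_iff_eq_neg.1 hu.symm))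

theorem mul_eq_neg_of_trace_mul_eq_zero {S T : Matrix (Fin 2) (Fin 2) F} (hS : S.trace = 0)
    (hT : T.trace = 0) (hST : (S * T).trace = 0) : S * T = -(T * S) := by
  rw [trace_fin_two] at hS hT hST
  rw [← Matrix.ext_iff]
  simp only [Fin.forall_fin_two, Matrix.mul_apply, Fin.sum_univ_two, Matrix.neg_apply] at hST ⊢
  grind

theorem exists_mul_eq_neg (hT : T.val.trace = 0) : ∃ S : GL (Fin 2) F, S * T = -(T * S) := by
  rw [trace_fin_two] at hT
  obtain ⟨x, y, z, hxyz, hdet⟩ :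
      ∃ x y z, 2 * T 0 0 * x + T 0 1 * z + T 1 0 * y = 0 ∧ x * x + y * z ≠ 0 := by
    by_cases hb : T 0 1 = 0
    · by_cases hc : T 1 0 = 0
      · exact ⟨0, 1, 1, by simp [hb, hc]⟩
      · exact ⟨T 1 0, -2 * T 0 0, 0, by grind⟩
    · exact ⟨T 0 1, 0, -2 * T 0 0, by grind⟩
  refine ⟨GeneralLinearGroup.mkOfDetNeZero !![x, y; z, -x] ?_, Units.ext ?_⟩
  · rw [det_fin_two_of]
    grind
  · refine mul_eq_neg_of_trace_mul_eq_zero ?_ ?_ ?_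
    · exact (trace_fin_two_of ..).trans (add_neg_cancel x)
    · rwa [trace_fin_two]
    · change (!![x, y; z, -x] * T.val).trace = 0
      simp only [trace_fin_two, Matrix.mul_apply, Fin.sum_univ_two, of_apply,
        cons_val_zero, cons_val_one, cons_val']
      grind

theorem generalLinearGroup_ne_neg [NeZero (2 : F)] (A : GL (Fin 2) F) : A ≠ -A := by
  intro h
  have h0 : (2 : F) • A.val = 0 := by
    rw [two_smul, add_eq_zero_iff_eq_neg]
    exact congrArg Units.val h
  exact (smul_ne_zero two_ne_zero A.ne_zero) h0

theorem relIndex_torus [NeZero (2 : F)] (hT : T.val.trace = 0) :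
    (torus T).relIndex (Subgroup.centralizer {mk T}) = 2 := by
  obtain ⟨S, hS⟩ := exists_mul_eq_neg hT
  have hScomm : mk S ∈ Subgroup.centralizer {mk T} := by
    rw [Subgroup.mem_centralizer_singleton_iff, ← map_mul, ← map_mul, hS]
    exact mk_eq_mk_of_eq_smul (c := -1) (by simp)
  refine Subgroup.relIndex_eq_two_iff.2 ⟨mk S, hScomm, fun g hg ↦ ?_⟩
  obtain ⟨A, rfl⟩ := mk_surjective g
  rw [← map_mul, mk_mem_torus_iff, mk_mem_torus_iff]
  have hAS (h : A * S * T = T * (A * S)) : A * T = -(T * A) := by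
    rw [← mul_left_inj S, neg_mul, mul_assoc T, ← h, mul_assoc A S, hS, mul_neg, neg_neg, mul_assoc]
  rcases commute_or_mul_eq_neg hg with hA | hA
  · exact .inr ⟨hA, fun h ↦ generalLinearGroup_ne_neg (T * A) (hA.eq.symm.trans (hAS h))⟩
  · refine .inl ⟨?_, fun h ↦ generalLinearGroup_ne_neg (T * A) (h.symm.trans hA)⟩
    rw [Commute, SemiconjBy, mul_assoc, hS, mul_neg, ← mul_assoc, hA, neg_mul, neg_neg, mul_assoc]

theorem mk_sq_eq_one_of_trace_eq_zero (hA : A.val.trace = 0) : mk A ^ 2 = 1 := by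
  by_cases h : mk A = 1
  · rw [h, one_pow]
  · exact (mk_sq_eq_one_iff h).2 hA

theorem trace_eq_zero_of_mul_eq_neg [NeZero (2 : F)] (h : A * T = -(T * A)) :
    A.val.trace = 0 := by
  have hconj : T.val * A.val * T⁻¹.val = -A.val := by
    rw [← Units.val_mul, ← Units.val_mul, ← neg_eq_iff_eq_neg.2 h]
    simp
  have htrace := congrArg Matrix.trace hconj
  rw [trace_units_conj, trace_neg] at htrace
  exact (Ring.eq_self_iff_eq_zero_of_char_ne_two (ringChar_ne_two F)).1 htrace.symm

theorem sq_eq_one_of_mem_centralizer_of_notMem_torus [NeZero (2 : F)] {g : PGL(2, F)}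
    (hg : g ∈ Subgroup.centralizer {mk T}) (hgT : g ∉ torus T) : g ^ 2 = 1 := by
  obtain ⟨A, rfl⟩ := mk_surjective g
  exact mk_sq_eq_one_of_trace_eq_zero <| trace_eq_zero_of_mul_eq_neg <|
    (commute_or_mul_eq_neg hg).resolve_left (mt mk_mem_torus_iff.2 hgT)

theorem eq_of_smul_one_add_smul_eq [NeZero (2 : F)] (hT : T.val.trace = 0) {u v u' v' : F}
    (h : u • (1 : Matrix (Fin 2) (Fin 2) F) + v • T.val = u' • 1 + v' • T.val) :
    u = u' ∧ v = v' := by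
  have htrace := congrArg Matrix.trace h
  have h2 : (2 : F) ≠ 0 := two_ne_zero
  simp only [trace_add, trace_smul, hT, trace_one, Fintype.card_fin, smul_eq_mul, mul_zero,
    add_zero, Nat.cast_ofNat] at htrace
  obtain rfl := mul_right_cancel₀ h2 htrace
  exact ⟨rfl, smul_left_injective F T.ne_zero (add_left_cancel h)⟩

theorem exists_eq_smul_one_add_smul [NeZero (2 : F)] (hT : T.val.trace = 0) (h : Commute A T) :
    ∃ u v : F, A.val = u • 1 + v • T.val := by
  have h2 : (2 : F) ≠ 0 := two_ne_zero
  have hcomm : Commute T.val (twiceTracelessPart A.val) :=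
    commute_twiceTracelessPart_right (Commute.units_val_iff.2 h.symm)
  obtain ⟨v, hv⟩ := exists_eq_smul_of_commute hT (trace_twiceTracelessPart A.val) T.ne_zero hcomm
  refine ⟨A.val.trace / 2, v / 2, smul_right_injective _ h2 ?_⟩
  simp only [smul_add, smul_smul, mul_div_cancel₀ _ h2, ← hv, twiceTracelessPart]
  abel

theorem mul_self_of_trace_eq_zero (hT : T.val.trace = 0) : T.val * T.val = -T.val.det • 1 := by
  rw [trace_fin_two] at hT
  rw [← Matrix.ext_iff]
  simp only [Fin.forall_fin_two, Matrix.mul_apply, Fin.sum_univ_two, Matrix.smul_apply,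
    one_apply, det_fin_two, smul_eq_mul]
  grind

theorem det_smul_one_add (hT : T.val.trace = 0) (z : F) :
    (z • (1 : Matrix (Fin 2) (Fin 2) F) + T.val).det = z ^ 2 + T.val.det := by
  rw [trace_fin_two] at hT
  simp only [det_fin_two, Matrix.add_apply, Matrix.smul_apply, one_apply, smul_eq_mul]
  grind

/-- The algebra `F[T] = {u + v T}` generated by a matrix `T` of trace zero, presented as the
image of the quadratic algebra `F[ω] / (ω² + det T)`. -/
def quadraticAlgebraHom (hT : T.val.trace = 0) :
    QuadraticAlgebra F (-T.val.det) 0 →ₐ[F] Matrix (Fin 2) (Fin 2) F :=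
  QuadraticAlgebra.lift ⟨T.val, by simpa using mul_self_of_trace_eq_zero hT⟩

theorem quadraticAlgebraHom_apply (hT : T.val.trace = 0) (z) :
    quadraticAlgebraHom hT z = z.re • 1 + z.im • T.val :=
  rfl

theorem quadraticAlgebraHom_injective [NeZero (2 : F)] (hT : T.val.trace = 0) :
    Function.Injective (quadraticAlgebraHom hT) := by
  intro z w h
  obtain ⟨hre, him⟩ := eq_of_smul_one_add_smul_eq hT h
  exact QuadraticAlgebra.ext hre him

theorem exists_quadraticAlgebraHom_eq [NeZero (2 : F)] (hT : T.val.trace = 0) (h : Commute A T) :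
    ∃ z, quadraticAlgebraHom hT z = A.val := by
  obtain ⟨u, v, huv⟩ := exists_eq_smul_one_add_smul hT h
  exact ⟨⟨u, v⟩, huv.symm⟩

theorem range_mk_comp_quadraticAlgebraHom [NeZero (2 : F)] (hT : T.val.trace = 0) :
    ((mk (n := Fin 2) (R := F)).comp (Units.map (quadraticAlgebraHom hT).toMonoidHom)).range =
      torus T := by
  ext g
  obtain ⟨A, rfl⟩ := mk_surjective g
  rw [mk_mem_torus_iff]
  constructor
  · rintro ⟨z, hz⟩
    rw [← mk_mem_torus_iff, ← hz, MonoidHom.comp_apply, mk_mem_torus_iff]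
    exact Commute.units_val_iff.1 <|
      ((Commute.one_left _).smul_left _).add_left ((Commute.refl _).smul_left _)
  · intro hA
    obtain ⟨z, hz⟩ := exists_quadraticAlgebraHom_eq hT hA
    obtain ⟨w, hw⟩ := exists_quadraticAlgebraHom_eq hT hA.inv_left
    have hinj := quadraticAlgebraHom_injective hT
    refine ⟨⟨z, w, hinj ?_, hinj ?_⟩, congrArg mk (Units.ext hz)⟩
    · rw [map_mul, hz, hw, map_one, Units.mul_inv]
    · rw [map_mul, hz, hw, map_one, Units.inv_mul]

theorem isCyclic_torus [Finite F] [NeZero (2 : F)] (hT : T.val.trace = 0) : IsCyclic (torus T) := by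
  obtain ⟨L, _, _, _, hL⟩ := exists_finite_isSquare_algebraMap F
  have := neZero_two_of_algebra F L
  obtain ⟨s, hs⟩ := hL (-T.val.det)
  have hs0 : s ≠ 0 := by
    rintro rfl
    simp [T.det_ne_zero] at hs
  let φ (t : L) (ht : t * t = algebraMap F L (-T.val.det)) :
      (QuadraticAlgebra F (-T.val.det) 0)ˣ →* Lˣ :=
    Units.map (QuadraticAlgebra.lift ⟨t, by simpa [Algebra.smul_def] using ht⟩).toMonoidHom
  let χ := φ s hs.symm / φ (-s) (by rw [neg_mul_neg, hs])
  rw [← range_mk_comp_quadraticAlgebraHom hT]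
  refine isCyclic_range_of_ker_le (χ := χ) fun z hz ↦ ?_
  have h : z.val.re • (1 : L) + z.val.im • s = z.val.re • 1 + z.val.im • -s :=
    congrArg Units.val (div_eq_one.1 hz)
  have him : z.val.im = 0 := by
    rw [add_right_inj, smul_neg] at h
    simpa [hs0] using (Ring.eq_self_iff_eq_zero_of_char_ne_two (ringChar_ne_two L)).1 h.symm
  rw [MonoidHom.mem_ker, MonoidHom.comp_apply, mk_eq_one_iff_apply]
  change (quadraticAlgebraHom hT z.val) 0 1 = 0 ∧ (quadraticAlgebraHom hT z.val) 1 0 = 0 ∧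
    (quadraticAlgebraHom hT z.val) 0 0 = (quadraticAlgebraHom hT z.val) 1 1
  simp [quadraticAlgebraHom_apply, him]

/-- The parametrization of `torus T` by the points of the projective line over `F` other than
the square roots of `-det T`: infinity corresponds to `1` and `z` to `z + T`. -/
def torusParam (hT : T.val.trace = 0) : Option {z : F // z ^ 2 ≠ -T.val.det} → PGL(2, F)
  | none => 1
  | some z => mk <| .mkOfDetNeZero (z.val • 1 + T.val) <| by
      rw [det_smul_one_add hT, Ne, add_eq_zero_iff_eq_neg]
      exact z.2

theorem torusParam_injective [NeZero (2 : F)] (hT : T.val.trace = 0) :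
    Function.Injective (torusParam hT) := by
  have hsome (z : F) {c : F} : z • (1 : Matrix (Fin 2) (Fin 2) F) + T.val ≠ c • 1 := fun h ↦
    one_ne_zero (α := F) (eq_of_smul_one_add_smul_eq hT (u := z) (u' := c) (by simpa using h)).2
  rintro (_ | z) (_ | w) h
  · rfl
  · obtain ⟨c, hc⟩ := exists_eq_smul_of_mk_eq_mk ((map_one mk).trans h)
    exact (hsome w hc).elim
  · obtain ⟨c, hc⟩ := exists_eq_smul_of_mk_eq_mk ((map_one mk).trans h.symm)
    exact (hsome z hc).elim
  · obtain ⟨c, hc : w.val • 1 + T.val = c • (z.val • 1 + T.val)⟩ := exists_eq_smul_of_mk_eq_mk h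
    rw [smul_add, smul_smul] at hc
    obtain ⟨hw, hc⟩ :=
      eq_of_smul_one_add_smul_eq hT (u := w) (v := 1) (u' := c * z) (v' := c) (by rwa [one_smul])
    rw [← hc, one_mul] at hw
    exact congrArg some (Subtype.ext hw.symm)

theorem range_torusParam [NeZero (2 : F)] (hT : T.val.trace = 0) :
    Set.range (torusParam hT) = torus T := by
  ext g
  constructor
  · rintro ⟨_ | z, rfl⟩
    · exact one_mem _
    · exact mk_mem_torus_iff.2 <| Commute.units_val_iff.1 <|
        ((Commute.one_left _).smul_left _).add_left (Commute.refl _)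
  · intro hg
    obtain ⟨A, rfl⟩ := mk_surjective g
    obtain ⟨u, v, huv⟩ := exists_eq_smul_one_add_smul hT (mk_mem_torus_iff.1 hg)
    by_cases hv : v = 0
    · exact ⟨none, .symm <| mk_eq_one_iff_apply.2 <| by simp [huv, hv]⟩
    · have hA : A.val = v • ((u / v) • 1 + T.val) := by
        rw [huv, smul_add, smul_smul, mul_div_cancel₀ _ hv]
      refine ⟨some ⟨u / v, fun h ↦ A.det_ne_zero ?_⟩, mk_eq_mk_of_eq_smul hA⟩
      rw [hA, det_smul, det_smul_one_add hT, h, neg_add_cancel, mul_zero]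

theorem card_torus [Finite F] [NeZero (2 : F)] (hT : T.val.trace = 0) :
    Nat.card (torus T) = Nat.card {z : F // z ^ 2 ≠ -T.val.det} + 1 := by
  rw [← Finite.card_option, ← Nat.card_range_of_injective (torusParam_injective hT),
    range_torusParam hT]
  rfl

theorem card_torus_eq_or [Finite F] [NeZero (2 : F)] (hT : T.val.trace = 0) :
    Nat.card (torus T) = Nat.card F + 1 ∨ Nat.card (torus T) = Nat.card F - 1 := by
  classical
  have := Fintype.ofFinite F
  have hroots : (Fintype.card {z : F // z ^ 2 = -T.val.det} : ℤ) =
      quadraticChar F (-T.val.det) + 1 := by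
    rw [← quadraticChar_card_sqrts (ringChar_ne_two F), Set.toFinset_card]
    rfl
  have hsplit := Fintype.card_subtype_compl fun z : F ↦ z ^ 2 = -T.val.det
  have hle := Fintype.card_subtype_le fun z : F ↦ z ^ 2 = -T.val.det
  rw [card_torus hT, Nat.card_eq_fintype_card, Nat.card_eq_fintype_card, hsplit]
  rcases quadraticChar_dichotomy (neg_ne_zero.2 T.det_ne_zero) with h | h <;> rw [h] at hroots
  · right
    omega
  · left
    omega

end Torus

theorem isKleinFour_of_card_le_four {G : Type*} [Group G] [Finite G] (hcard : Nat.card G ≤ 4)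
    (hexp : Monoid.exponent G ∣ 2) {K : Subgroup G} (hK : Nat.card K = 2) (hK_top : K ≠ ⊤) :
    IsKleinFour G := by
  have hmul := K.card_mul_index
  have hindex : 1 < K.index := K.one_lt_index_of_ne_top hK_top
  have h4 : Nat.card G = 4 := by
    rw [hK] at hmul
    omega
  refine ⟨h4, ((Nat.dvd_prime Nat.prime_two).1 hexp).resolve_left fun h ↦ ?_⟩
  have := Monoid.exp_eq_one_iff.1 h
  simp at h4

section TorusNormalizer

variable {F : Type*} [Field F] [NeZero (2 : F)] {T T' : GL (Fin 2) F}

theorem nonempty_centralizer_mulEquiv_dihedralGroup [Finite F] (hT : T.val.trace = 0) :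
    Nonempty (Subgroup.centralizer {mk T} ≃* DihedralGroup (Nat.card F + 1)) ∨
      Nonempty (Subgroup.centralizer {mk T} ≃* DihedralGroup (Nat.card F - 1)) := by
  let e := Subgroup.subgroupOfEquivOfLe (torus_le_centralizer (T := T))
  have : IsCyclic ((torus T).subgroupOf (Subgroup.centralizer {mk T})) :=
    e.isCyclic.2 (isCyclic_torus hT)
  have hdihedral := nonempty_mulEquiv_dihedralGroup (relIndex_torus hT) fun g hg ↦
    Subtype.ext <| (pow_two g.val).symm.trans <|
      sq_eq_one_of_mem_centralizer_of_notMem_torus g.2 (mt Subgroup.mem_subgroupOf.2 hg)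
  rw [Nat.card_congr e.toEquiv] at hdihedral
  rcases card_torus_eq_or hT with h | h <;> rw [h] at hdihedral
  · exact .inl hdihedral
  · exact .inr hdihedral

theorem torus_inf_torus_eq_bot (hT : T.val.trace = 0) (hT' : T'.val.trace = 0)
    (hne : mk T ≠ mk T') : torus T ⊓ torus T' = ⊥ := by
  refine (Subgroup.eq_bot_iff_forall _).2 fun g hg ↦ ?_
  obtain ⟨A, rfl⟩ := mk_surjective g
  have hAT' := Commute.units_val_iff.2 (mk_mem_torus_iff.1 hg.2)
  obtain ⟨u, v, huv⟩ := exists_eq_smul_one_add_smul hT (mk_mem_torus_iff.1 hg.1)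
  have hv : v = 0 := by
    by_contra hv
    refine hne (mk_eq_mk_of_commute hT hT' (Commute.units_val_iff.1 ?_))
    have hvT : T.val = v⁻¹ • (A.val - u • 1) := by
      rw [huv, add_sub_cancel_left, inv_smul_smul₀ hv]
    rw [hvT]
    exact (hAT'.sub_left ((Commute.one_left _).smul_left u)).smul_left _
  exact mk_eq_one_iff_apply.2 (by simp [huv, hv])

theorem card_le_four_of_le_centralizer (hT : T.val.trace = 0) (hT' : T'.val.trace = 0)
    (hne : mk T ≠ mk T') {H : Subgroup PGL(2, F)} (hH : H ≤ Subgroup.centralizer {mk T})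
    (hH' : H ≤ Subgroup.centralizer {mk T'}) : Nat.card H ≤ 4 := by
  have hindex {S : GL (Fin 2) F} (hS : S.val.trace = 0) (hHS : H ≤ Subgroup.centralizer {mk S}) :
      (torus S).relIndex H ≤ 2 :=
    (Subgroup.relIndex_le_of_le_right hHS
      ((relIndex_torus hS).trans_ne two_ne_zero)).trans_eq (relIndex_torus hS)
  calc Nat.card H = (torus T ⊓ torus T').relIndex H := by
        rw [torus_inf_torus_eq_bot hT hT' hne, Subgroup.relIndex_bot_left]
    _ ≤ (torus T).relIndex H * (torus T').relIndex H := Subgroup.relIndex_inf_le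
    _ ≤ 2 * 2 := Nat.mul_le_mul (hindex hT hH) (hindex hT' hH')

theorem exponent_dvd_two_of_le_centralizer (hT : T.val.trace = 0) (hT' : T'.val.trace = 0)
    (hne : mk T ≠ mk T') {H : Subgroup PGL(2, F)} (hH : H ≤ Subgroup.centralizer {mk T})
    (hH' : H ≤ Subgroup.centralizer {mk T'}) : Monoid.exponent H ∣ 2 := by
  refine Monoid.exponent_dvd_of_forall_pow_eq_one fun ⟨g, hg⟩ ↦ Subtype.ext ?_
  change g ^ 2 = 1
  by_cases hgT : g ∈ torus T
  · by_cases hgT' : g ∈ torus T'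
    · have : g ∈ torus T ⊓ torus T' := ⟨hgT, hgT'⟩
      rw [torus_inf_torus_eq_bot hT hT' hne, Subgroup.mem_bot] at this
      rw [this, one_pow]
    · exact sq_eq_one_of_mem_centralizer_of_notMem_torus (hH' hg) hgT'
  · exact sq_eq_one_of_mem_centralizer_of_notMem_torus (hH hg) hgT

theorem isKleinFour_of_le_centralizer [Finite F] (hT : T.val.trace = 0) (hT' : T'.val.trace = 0)
    (hne : mk T ≠ mk T') {H : Subgroup PGL(2, F)} (hH : H ≤ Subgroup.centralizer {mk T})
    (hH' : H ≤ Subgroup.centralizer {mk T'}) {x : PGL(2, F)} (hx : orderOf x = 2)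
    (hxH : Subgroup.zpowers x < H) : IsKleinFour H := by
  refine isKleinFour_of_card_le_four (card_le_four_of_le_centralizer hT hT' hne hH hH')
    (exponent_dvd_two_of_le_centralizer hT hT' hne hH hH')
    (K := (Subgroup.zpowers x).subgroupOf H) ?_ (mt Subgroup.subgroupOf_eq_top.1 hxH.not_ge)
  rw [Nat.card_congr (Subgroup.subgroupOfEquivOfLe hxH.le).toEquiv, Nat.card_zpowers, hx]

theorem eq_centralizer_of_isCoatom [Finite F] (hneg : IsSquare (-1 : F)) (h2 : IsSquare (2 : F))
    (hF : ∀ E : Subfield F, E ≠ ⊤ → ∀ e ∈ E, IsSquare e) {x : PGL(2, F)} (hx : orderOf x = 2)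
    (hxS : x ∉ (SpecialLinearGroup.toPGL (n := Fin 2) (R := F)).range) {M : Subgroup PGL(2, F)}
    (hM : IsCoatom M) (hxM : x ∈ M) :
    ∃ T : GL (Fin 2) F, T.val.trace = 0 ∧ M = Subgroup.centralizer {mk T} := by
  obtain ⟨X, rfl⟩ := mk_surjective x
  have hX1 : mk X ≠ 1 := fun h ↦ by simp [h] at hx
  have hsq : mk X ^ 2 = 1 := (orderOf_eq_prime_iff.1 hx).1
  have htrace := (mk_sq_eq_one_iff hX1).1 hsq
  obtain ⟨T, hT, hMT⟩ :=
    exists_le_centralizer hneg h2 hF hM.1 hxM (mt mk_mem_range_toPGL.2 hxS) htrace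
  exact ⟨T, hT, (hM.le_iff_eq (centralizer_ne_top hT)).1 hMT |>.symm⟩

end TorusNormalizer

theorem intersection_of_maximals_above_outer_involution_general {F : Type*} [Field F] [Finite F]
    (hcard : Nat.card F % 8 = 1) (hF : ∀ E : Subfield F, E ≠ ⊤ → ∀ e ∈ E, IsSquare e)
    {x : PGL(2, F)} (hx : orderOf x = 2)
    (hxS : x ∉ (SpecialLinearGroup.toPGL (n := Fin 2) (R := F)).range)
    {H : Subgroup PGL(2, F)} (hxH : Subgroup.zpowers x < H)
    (hint : ∃ 𝓜 : Set (Subgroup PGL(2, F)), 𝓜.Nonempty ∧ (∀ M ∈ 𝓜, IsCoatom M) ∧ H = sInf 𝓜) :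
    Nonempty (H ≃* DihedralGroup (Nat.card F + 1)) ∨
      Nonempty (H ≃* DihedralGroup (Nat.card F - 1)) ∨ IsKleinFour H := by
  have := Fintype.ofFinite F
  rw [Nat.card_eq_fintype_card] at hcard
  have hneg : IsSquare (-1 : F) := FiniteField.isSquare_neg_one_iff.2 (by omega)
  have h2 : IsSquare (2 : F) := FiniteField.isSquare_two_iff.2 (by omega)
  have : NeZero (2 : F) := ⟨Ring.two_ne_zero fun h ↦ by
    have := FiniteField.even_card_of_char_two h
    omega⟩
  obtain ⟨𝓜, ⟨M, hM⟩, hcoatom, rfl⟩ := hint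
  have hcentralizer {N : Subgroup PGL(2, F)} (hN : N ∈ 𝓜) :=
    eq_centralizer_of_isCoatom hneg h2 hF hx hxS (hcoatom N hN)
      (hxH.le.trans (sInf_le hN) (Subgroup.mem_zpowers x))
  obtain ⟨T, hT, rfl⟩ := hcentralizer hM
  by_cases hall : ∀ N ∈ 𝓜, N = Subgroup.centralizer {mk T}
  · rw [Set.eq_singleton_iff_unique_mem.2 ⟨hM, hall⟩, sInf_singleton]
    exact (nonempty_centralizer_mulEquiv_dihedralGroup hT).imp_right .inl
  · push Not at hall
    obtain ⟨N, hN, hne⟩ := hall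
    obtain ⟨T', hT', rfl⟩ := hcentralizer hN
    exact .inr <| .inr <| isKleinFour_of_le_centralizer hT hT' (fun h ↦ hne (by rw [h]))
      (sInf_le hM) (sInf_le hN) hx hxH

theorem pow_two_pow_mod_eight_of_odd {p n : ℕ} (hodd : Odd p) (hn : n ≠ 0) :
    p ^ 2 ^ n % 8 = 1 := by
  obtain ⟨m, rfl⟩ := Nat.exists_eq_succ_of_ne_zero hn
  rw [Nat.pow_succ, pow_mul]
  have hdvd := Nat.eight_dvd_sq_sub_one_of_odd (hodd.pow (n := 2 ^ m))
  have := (hodd.pow (n := 2 ^ m)).pow (n := 2) |>.pos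
  lia

/-- Any proper subgroup of `PGL₂(q)` strictly containing `⟨x⟩` (for `x` an outer
involution) which is an intersection of a nonempty family of maximal subgroups is
dihedral of order `2(q+1)`, dihedral of order `2(q-1)`, or a Klein four-group. -/
theorem intersection_of_maximals_above_outer_involution (p n : ℕ) (hp : Nat.Prime p) (hodd : Odd p) (hn : 1 ≤ n)
    (F : Type) [Field F] [Fintype F] (hF : Fintype.card F = p ^ 2 ^ n)
    (x : ProjectiveGL2 F) (hx : orderOf x = 2) (hxS : x ∉ socleSL2 F)
    (H : Subgroup (ProjectiveGL2 F)) (hHtop : H ≠ ⊤)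
    (hxH : Subgroup.zpowers x < H)
    (hint : ∃ 𝓜 : Set (Subgroup (ProjectiveGL2 F)),
      𝓜.Nonempty ∧ (∀ M ∈ 𝓜, IsCoatom M) ∧ H = sInf 𝓜) :
    Nonempty (H ≃* DihedralGroup (p ^ 2 ^ n + 1)) ∨
      Nonempty (H ≃* DihedralGroup (p ^ 2 ^ n - 1)) ∨ IsKleinFour ↥H := by
  rw [← Nat.card_eq_fintype_card] at hF
  rw [← hF]
  exact intersection_of_maximals_above_outer_involution_general
    (hF ▸ pow_two_pow_mod_eight_of_odd hodd (Nat.one_le_iff_ne_zero.1 hn))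
    (fun E hE e ↦ isSquare_of_mem_subfield_ne_top hp hF hE) hx hxS hxH hint
end
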